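/- Let Ω ⊂ ℝ² be a compact convex set of positive measure and let Q ⊂ (0,∞) be a uniformly discrete set. Then the union of concentric circles P = Q𝕋 = ⋃_{q∈Q} {x ∈ ℝ² : |x| = q} is a sampling set for B_Ω if and only if Diam(Ω) < d⁻(Q), where Diam(Ω) = sup{|x − y| : x, y ∈ Ω}. -/

import Mathlib

open MeasureTheory FourierTransform Filter Metric
open scoped Pointwise RealInnerProductSpace ENNReal NNReal

noncomputable section

variable {V : Type*} [NormedAddCommGroup V] [InnerProductSpace ℝ V]
  [FiniteDimensional ℝ V] [MeasurableSpace V] [BorelSpace V]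

/-- `f` belongs to the Bernstein space `B_Ω`: it is a continuous bounded function which is the
inverse Fourier transform of a tempered distribution supported in `Ω`, i.e. its distributional
Fourier transform annihilates every test function whose support is disjoint from `Ω`. -/
def MemBernstein (Ω : Set V) (f : V → ℂ) : Prop :=
  Continuous f ∧ (∃ C, ∀ x, ‖f x‖ ≤ C) ∧
    ∀ ψ : V → ℂ, ContDiff ℝ (⊤ : ℕ∞) ψ → HasCompactSupport ψ → tsupport ψ ∩ Ω = ∅ →
      ∫ x, f x * 𝓕 ψ x = 0

/-- `P` is a sampling set for the Bernstein space `B_Ω`: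
`‖f‖_∞ ≤ C · sup_{x ∈ P} ‖f x‖` for all `f ∈ B_Ω`. -/
def IsSamplingSet (Ω P : Set V) : Prop :=
  ∃ C > 0, ∀ f : V → ℂ, MemBernstein Ω f →
    ∀ x : V, ‖f x‖ ≤ C * sSup ((fun p => ‖f p‖) '' P)

/-- A set is uniformly discrete if distinct points are separated by a fixed positive distance. -/
def UniformlyDiscrete {X : Type*} [PseudoMetricSpace X] (Λ : Set X) : Prop :=
  ∃ δ > 0, ∀ x ∈ Λ, ∀ y ∈ Λ, x ≠ y → δ ≤ dist x y

/-- The lower uniform (Beurling) density of a set: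
`D⁻(Λ) = lim_{r→∞} inf_x #(Λ ∩ B_r(x)) / |B_r(x)|`. -/
def lowerUniformDensity {X : Type*} [NormedAddCommGroup X] [MeasureSpace X] (Λ : Set X) : ℝ :=
  liminf (fun r : ℝ => ⨅ x : X,
    (Nat.card ↥(Λ ∩ closedBall x r) : ℝ) / (volume (closedBall x r)).toReal) atTop

section ConcentricSpheres

open Real Complex Topology
open scoped BoundedContinuousFunction

section BernsteinOperations

variable {Ω Ω' : Set V} {f : V → ℂ} {ψ : V → ℂ}

lemma integrable_fourier_of_hasCompactSupport (h₁ : ContDiff ℝ (⊤ : ℕ∞) ψ)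
    (h₂ : HasCompactSupport ψ) : Integrable (𝓕 ψ) := by
  have := (𝓕 (h₂.toSchwartzMap h₁)).integrable (μ := volume)
  rwa [SchwartzMap.fourier_coe] at this

lemma fourierInv_fourier_of_hasCompactSupport (h₁ : ContDiff ℝ (⊤ : ℕ∞) ψ)
    (h₂ : HasCompactSupport ψ) : 𝓕⁻ (𝓕 ψ) = ψ :=
  h₁.continuous.fourierInv_fourier_eq (h₁.continuous.integrable_of_hasCompactSupport h₂)
    (integrable_fourier_of_hasCompactSupport h₁ h₂)

lemma MemBernstein.mono (h : MemBernstein Ω f) (hΩ : Ω ⊆ Ω') : MemBernstein Ω' f :=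
  ⟨h.1, h.2.1, fun ψ h₁ h₂ h₃ => h.2.2 ψ h₁ h₂
    (Set.eq_empty_of_subset_empty ((Set.inter_subset_inter_right _ hΩ).trans h₃.subset))⟩

lemma MemBernstein.const_mul (h : MemBernstein Ω f) (c : ℂ) :
    MemBernstein Ω (fun x => c * f x) := by
  obtain ⟨h₁, ⟨C, hC⟩, h₂⟩ := h
  refine ⟨continuous_const.mul h₁, ⟨‖c‖ * C, fun x => ?_⟩, fun ψ a b d => ?_⟩
  · rw [norm_mul]
    exact mul_le_mul_of_nonneg_left (hC x) (norm_nonneg _)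
  · simp_rw [mul_assoc]
    rw [integral_const_mul, h₂ ψ a b d, mul_zero]

lemma integrable_mul_fourier (hf : Continuous f) (hb : ∃ C, ∀ x, ‖f x‖ ≤ C)
    (h₁ : ContDiff ℝ (⊤ : ℕ∞) ψ) (h₂ : HasCompactSupport ψ) :
    Integrable (fun x => f x * 𝓕 ψ x) := by
  obtain ⟨C, hC⟩ := hb
  exact (integrable_fourier_of_hasCompactSupport h₁ h₂).bdd_mul (c := C)
    hf.aestronglyMeasurable (Eventually.of_forall hC)

lemma MemBernstein.add {g : V → ℂ} (hf : MemBernstein Ω f) (hg : MemBernstein Ω g) :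
    MemBernstein Ω (fun x => f x + g x) := by
  refine ⟨hf.1.add hg.1, ?_, fun ψ a b d => ?_⟩
  · obtain ⟨C, hC⟩ := hf.2.1
    obtain ⟨D, hD⟩ := hg.2.1
    exact ⟨C + D, fun x => (norm_add_le _ _).trans (add_le_add (hC x) (hD x))⟩
  · simp_rw [add_mul]
    rw [integral_add (integrable_mul_fourier hf.1 hf.2.1 a b)
      (integrable_mul_fourier hg.1 hg.2.1 a b), hf.2.2 ψ a b d, hg.2.2 ψ a b d, add_zero]

lemma contDiff_cexp_inner {W : Type*} [NormedAddCommGroup W] [InnerProductSpace ℝ W] (x : W) :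
    ContDiff ℝ (⊤ : ℕ∞) (fun v : W => cexp (↑(2 * π * ⟪v, x⟫) * I)) := by
  apply ContDiff.cexp
  apply ContDiff.mul _ contDiff_const
  exact Complex.ofRealCLM.contDiff.comp (contDiff_const.mul (contDiff_id.inner ℝ contDiff_const))

lemma MemBernstein.comp_add_right (hf : MemBernstein Ω f) (x₀ : V) :
    MemBernstein Ω (fun x => f (x + x₀)) := by
  refine ⟨hf.1.comp (continuous_id.add continuous_const), ?_, fun ψ a b d => ?_⟩
  · obtain ⟨C, hC⟩ := hf.2.1
    exact ⟨C, fun x => hC _⟩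
  · have := hf.2.2 (fun v => cexp (↑(2 * π * ⟪v, x₀⟫) * I) * ψ v)
      ((contDiff_cexp_inner x₀).mul a) b.mul_left
      (Set.eq_empty_of_subset_empty ((Set.inter_subset_inter_left _
        (tsupport_mul_subset_right)).trans d.subset))
    rw [← this, ← integral_add_right_eq_self (fun x => f x *
      𝓕 (fun v => cexp (↑(2 * π * ⟪v, x₀⟫) * I) * ψ v) x) x₀]
    refine integral_congr_ae (Eventually.of_forall fun x => ?_)
    simp only
    congr 1
    rw [fourier_eq', fourier_eq']
    refine integral_congr_ae (Eventually.of_forall fun v => ?_)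
    simp only [smul_eq_mul]
    rw [← mul_assoc, ← Complex.exp_add]
    congr 2
    rw [inner_add_right]
    push_cast
    ring

lemma MemBernstein.cexp_mul (hf : MemBernstein Ω f) (η : V) (hΩ : ∀ ξ ∈ Ω, ξ + η ∈ Ω') :
    MemBernstein Ω' (fun x => cexp (↑(2 * π * ⟪x, η⟫) * I) * f x) := by
  refine ⟨(contDiff_cexp_inner η).continuous.mul hf.1, ?_, fun ψ a b d => ?_⟩
  · obtain ⟨C, hC⟩ := hf.2.1
    refine ⟨C, fun x => ?_⟩
    rw [norm_mul, Complex.norm_exp_ofReal_mul_I, one_mul]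
    exact hC x
  · have key := hf.2.2 (fun v => ψ (v + η)) (a.comp (contDiff_id.add contDiff_const))
      (b.comp_homeomorph (Homeomorph.addRight η)) ?_
    · rw [← key]
      refine integral_congr_ae (Eventually.of_forall fun x => ?_)
      simp only
      rw [mul_comm (cexp _), mul_assoc]
      congr 1
      rw [fourier_eq', fourier_eq', ← integral_const_mul,
        ← integral_add_right_eq_self _ η]
      refine integral_congr_ae (Eventually.of_forall fun v => ?_)
      simp only [smul_eq_mul]
      rw [← mul_assoc, ← Complex.exp_add]
      congr 2
      rw [inner_add_left, real_inner_comm x η]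
      push_cast
      ring
    · rw [Set.eq_empty_iff_forall_notMem]
      rintro ξ ⟨h, h'⟩
      have : ξ + η ∈ tsupport ψ := by
        have := tsupport_comp_subset_preimage ψ (f := fun v : V => v + η) (by fun_prop) h
        exact this
      exact Set.eq_empty_iff_forall_notMem.1 d _ ⟨this, hΩ ξ h'⟩

lemma MemBernstein.comp_smul (hf : MemBernstein Ω f) {ρ : ℝ} (hρ : 0 < ρ)
    (hΩ : ∀ ξ ∈ Ω, ρ • ξ ∈ Ω') :
    MemBernstein Ω' (fun x => f (ρ • x)) := by
  refine ⟨hf.1.comp (continuous_const_smul ρ), ?_, fun ψ a b d => ?_⟩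
  · obtain ⟨C, hC⟩ := hf.2.1
    exact ⟨C, fun x => hC _⟩
  · have key := hf.2.2 (fun v => ψ (ρ • v)) (a.comp (contDiff_const_smul ρ))
      (b.comp_smul hρ.ne') ?_
    · have h1 : ∀ x, 𝓕 (fun v => ψ (ρ • v)) (ρ • x)
          = |(ρ ^ Module.finrank ℝ V)⁻¹| • 𝓕 ψ x := by
        intro x
        rw [fourier_eq', fourier_eq', ← Measure.integral_comp_smul volume _ ρ]
        refine integral_congr_ae (Eventually.of_forall fun v => ?_)
        simp only [inner_smul_left, inner_smul_right, conj_trivial]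
      have h2 := Measure.integral_comp_smul volume
        (fun x => f x * 𝓕 (fun v => ψ (ρ • v)) x) ρ
      rw [key, smul_zero] at h2
      simp_rw [h1, mul_smul_comm] at h2
      rw [integral_smul] at h2
      refine (smul_eq_zero.1 h2).resolve_left ?_
      positivity
    · rw [Set.eq_empty_iff_forall_notMem]
      rintro ξ ⟨h, h'⟩
      have : ρ • ξ ∈ tsupport ψ :=
        tsupport_comp_subset_preimage ψ (f := fun v : V => ρ • v) (by fun_prop) h
      exact Set.eq_empty_iff_forall_notMem.1 d _ ⟨this, hΩ ξ h'⟩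

lemma memBernstein_one (h0 : (0 : V) ∈ Ω) : MemBernstein Ω (fun _ => 1) := by
  refine ⟨continuous_const, ⟨1, fun x => by simp⟩, fun ψ a b d => ?_⟩
  have h := congrFun (fourierInv_fourier_of_hasCompactSupport a b) 0
  rw [fourierInv_eq'] at h
  simp only [inner_zero_right, mul_zero, ofReal_zero, zero_mul, Complex.exp_zero, one_smul] at h
  simp only [one_mul]
  rw [h]
  by_contra hne
  exact Set.eq_empty_iff_forall_notMem.1 d 0 ⟨subset_tsupport _ hne, h0⟩

lemma integral_cexp_eq_sinc (t : ℝ) :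
    ∫ θ in (-(1 / 2) : ℝ)..(1 / 2), cexp (↑(2 * π * (θ * t)) * I) = (sinc (π * t) : ℝ) := by
  rcases eq_or_ne t 0 with rfl | ht
  · norm_num
  · have hc : (2 * π * t * I : ℂ) ≠ 0 := by
      simp [Real.pi_ne_zero, ht]
    have : ∀ θ : ℝ, cexp (↑(2 * π * (θ * t)) * I) = cexp ((2 * π * t * I : ℂ) * θ) := by
      intro θ; congr 1; push_cast; ring
    simp_rw [this]
    rw [integral_exp_mul_complex hc, sinc_of_ne_zero (by positivity)]
    push_cast
    rw [Complex.sin]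
    have hI : (I:ℂ) ≠ 0 := I_ne_zero
    have hp : (π:ℂ) ≠ 0 := by simp [Real.pi_ne_zero]
    have ht' : (t:ℂ) ≠ 0 := by simpa using ht
    have e1 : (2 * π * t * I : ℂ) * (1/2) = π * t * I := by ring
    have e2 : (2 * π * t * I : ℂ) * (-(1/2)) = -(π * t) * I := by ring
    rw [e1, e2]
    field_simp
    rw [I_sq]
    ring

lemma MemBernstein.sinc_mul (hf : MemBernstein Ω f) (w : V)
    (hΩ : ∀ ξ ∈ Ω, ∀ θ : ℝ, |θ| ≤ 1 / 2 → ξ + θ • w ∈ Ω') :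
    MemBernstein Ω' (fun x => (sinc (π * ⟪x, w⟫) : ℝ) * f x) := by
  refine ⟨?_, ?_, fun ψ a b d => ?_⟩
  · exact (continuous_ofReal.comp (continuous_sinc.comp (by fun_prop))).mul hf.1
  · obtain ⟨C, hC⟩ := hf.2.1
    refine ⟨C, fun x => ?_⟩
    rw [norm_mul, norm_real, Real.norm_eq_abs]
    exact (mul_le_of_le_one_left (norm_nonneg _) (abs_sinc_le_one _)).trans (hC x)
  · have hint := integrable_mul_fourier hf.1 hf.2.1 a b
    have h1 : ∀ x, ((sinc (π * ⟪x, w⟫) : ℝ) : ℂ) * f x * 𝓕 ψ x =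
        ∫ θ in (-(1 / 2) : ℝ)..(1 / 2),
          cexp (↑(2 * π * (θ * ⟪x, w⟫)) * I) * (f x * 𝓕 ψ x) := by
      intro x
      rw [intervalIntegral.integral_mul_const, integral_cexp_eq_sinc, mul_assoc]
    simp_rw [h1]
    simp_rw [intervalIntegral.integral_of_le (show (-(1 / 2) : ℝ) ≤ 1 / 2 by norm_num)]
    rw [integral_integral_swap]
    · rw [setIntegral_congr_fun (g := fun _ => (0 : ℂ)) measurableSet_Ioc, integral_zero]
      intro θ hθ
      have := (hf.cexp_mul (θ • w) (Ω' := Ω')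
        (fun ξ hξ => hΩ ξ hξ θ (abs_le.2 ⟨hθ.1.le, hθ.2⟩))).2.2 ψ a b d
      simp only [inner_smul_right, mul_assoc] at this ⊢
      exact this
    · have h2 : Integrable (fun p : V × ℝ => (f p.1 * 𝓕 ψ p.1) * (1 : ℂ))
          (volume.prod (volume.restrict (Set.Ioc (-(1 / 2) : ℝ) (1 / 2)))) :=
        hint.mul_prod (integrable_const 1)
      have h3 := h2.bdd_mul (c := 1) (f := fun p : V × ℝ =>
        cexp (↑(2 * π * (p.2 * ⟪p.1, w⟫)) * I)) (by
          apply Continuous.aestronglyMeasurable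
          fun_prop) (Eventually.of_forall fun p => by
          rw [Complex.norm_exp_ofReal_mul_I])
      simpa [Function.uncurry_def] using h3

end BernsteinOperations

lemma exists_bandlimited_window {Ω : Set V} (hΩ : IsCompact Ω) {δ : ℝ} (hδ : 0 < δ) :
    ∃ A : ℝ, 0 ≤ A ∧ ∃ κ : V → ℂ, Continuous κ ∧ κ 0 = 1 ∧ (∀ x, ‖κ x‖ ≤ 1) ∧
      ∀ f, MemBernstein Ω f → ∀ M, (∀ x, ‖f x‖ ≤ M) → ∀ x₀, ∃ G : V → ℂ, Integrable G ∧
        (∀ ξ ∉ cthickening δ Ω, G ξ = 0) ∧ ∫ ξ, ‖G ξ‖ ≤ A * M ∧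
        ∀ x, f x * κ (x - x₀) = ∫ ξ, cexp (↑(2 * π * ⟪ξ, x⟫) * I) * G ξ := by
  let b : ContDiffBump (0 : V) := ⟨δ / 2, δ, by positivity, by linarith⟩
  let β : V → ℂ := fun v => (b.normed volume v : ℝ)
  have hβ₁ : ContDiff ℝ (⊤ : ℕ∞) β := Complex.ofRealCLM.contDiff.comp b.contDiff_normed
  have hβ₀ : tsupport β ⊆ closedBall 0 δ := by
    have : tsupport β ⊆ tsupport (b.normed volume) := by
      apply closure_mono
      intro v hv
      simpa [β] using hv
    rwa [b.tsupport_normed_eq] at this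
  have hβ₂ : HasCompactSupport β :=
    (isCompact_closedBall (0 : V) δ).of_isClosed_subset (isClosed_tsupport β) hβ₀
  have hκi : Integrable (𝓕 β) := integrable_fourier_of_hasCompactSupport hβ₁ hβ₂
  have hκc : Continuous (𝓕 β) := by
    have := (𝓕 (hβ₂.toSchwartzMap hβ₁)).continuous
    rwa [SchwartzMap.fourier_coe] at this
  have hβn : ∫ v, ‖β v‖ = 1 := by
    rw [← b.integral_normed (μ := volume)]
    refine integral_congr_ae (Eventually.of_forall fun v => ?_)
    simp only [β, norm_real, Real.norm_eq_abs]
    exact abs_of_nonneg (b.nonneg_normed v)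
  have hK : IsCompact (cthickening δ Ω) := hΩ.cthickening
  refine ⟨volume.real (cthickening δ Ω) * ∫ x, ‖𝓕 β x‖, by positivity, 𝓕 β, hκc, ?_, ?_, ?_⟩
  · rw [fourier_eq']
    simp only [inner_zero_right, mul_zero, ofReal_zero, zero_mul, Complex.exp_zero, one_smul, β]
    rw [integral_complex_ofReal, b.integral_normed, ofReal_one]
  · intro x
    rw [fourier_eq', ← hβn]
    refine (norm_integral_le_integral_norm _).trans (le_of_eq ?_)
    refine integral_congr_ae (Eventually.of_forall fun v => ?_)
    simp only [norm_smul, Complex.norm_exp_ofReal_mul_I, one_mul]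
  intro f hf M hM x₀
  have hM0 : 0 ≤ M := (norm_nonneg _).trans (hM 0)
  set F : V → ℂ := fun x => f x * 𝓕 β (x - x₀) with hF
  have hFc : Continuous F := hf.1.mul (hκc.comp (continuous_id.sub continuous_const))
  have hκi' : Integrable (fun x => 𝓕 β (x - x₀)) := hκi.comp_sub_right x₀
  have hFi : Integrable F :=
    hκi'.bdd_mul (c := M) hf.1.aestronglyMeasurable (Eventually.of_forall hM)
  have hG0 : ∀ ξ ∉ cthickening δ Ω, 𝓕 F ξ = 0 := by
    intro ξ hξ
    have h1 := ((hf.cexp_mul (-ξ) (Ω' := (fun v => v - ξ) '' Ω)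
      (fun η hη => ⟨η, hη, by simp [sub_eq_add_neg]⟩)).comp_add_right x₀).2.2 β hβ₁ hβ₂ ?_
    · rw [← h1, fourier_eq', ← integral_add_right_eq_self
        (fun v => cexp (↑(-2 * π * ⟪v, ξ⟫) * I) • F v) x₀]
      refine integral_congr_ae (Eventually.of_forall fun v => ?_)
      simp only [hF, add_sub_cancel_right, smul_eq_mul, inner_neg_right, mul_assoc]
      congr 3
      push_cast
      ring
    · rw [Set.eq_empty_iff_forall_notMem]
      rintro v ⟨hv, η, hη, rfl⟩
      have := hβ₀ hv
      rw [mem_closedBall_zero_iff] at this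
      refine hξ (mem_cthickening_of_dist_le ξ η δ Ω hη ?_)
      rwa [dist_eq_norm, ← norm_neg, neg_sub]
  have hGc : Continuous (𝓕 F) :=
    VectorFourier.fourierIntegral_continuous Real.continuous_fourierChar
      continuous_inner hFi
  have hGi : Integrable (𝓕 F) := hGc.integrable_of_hasCompactSupport
    (HasCompactSupport.intro hK hG0)
  have hGb : ∀ ξ, ‖𝓕 F ξ‖ ≤ M * ∫ x, ‖𝓕 β x‖ := by
    intro ξ
    rw [← integral_const_mul, ← integral_sub_right_eq_self (fun x => M * ‖𝓕 β x‖) x₀,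
      fourier_eq']
    refine norm_integral_le_of_norm_le (hκi'.norm.const_mul M) (Eventually.of_forall fun v => ?_)
    simp only [norm_smul, Complex.norm_exp_ofReal_mul_I, one_mul, hF, norm_mul]
    exact mul_le_mul_of_nonneg_right (hM v) (norm_nonneg _)
  refine ⟨𝓕 F, hGi, hG0, ?_, fun x => ?_⟩
  · rw [← setIntegral_eq_integral_of_forall_compl_eq_zero (s := cthickening δ Ω)
      (fun ξ hξ => by rw [hG0 ξ hξ, norm_zero])]
    calc ∫ ξ in cthickening δ Ω, ‖𝓕 F ξ‖
        ≤ ∫ ξ in cthickening δ Ω, (M * ∫ x, ‖𝓕 β x‖) := by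
          refine setIntegral_mono hGi.norm.integrableOn ?_ hGb
          exact integrableOn_const hK.measure_lt_top.ne
      _ = _ := by
          rw [setIntegral_const, smul_eq_mul]
          ring
  · have := congrFun (hFc.fourierInv_fourier_eq hFi hGi) x
    rw [fourierInv_eq'] at this
    exact this.symm

/-- Functions in `B_Ω` bounded by one are uniformly equicontinuous. -/
lemma exists_modulus_of_memBernstein {Ω : Set V} (hΩ : IsCompact Ω) {ε : ℝ} (hε : 0 < ε) :
    ∃ r > 0, ∀ f, MemBernstein Ω f → (∀ x, ‖f x‖ ≤ 1) → ∀ x y, dist x y < r →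
      dist (f x) (f y) < ε := by
  obtain ⟨A, hA, κ, hκc, hκ0, -, H⟩ := exists_bandlimited_window hΩ (δ := 1) one_pos
  obtain ⟨B, hB⟩ := (hΩ.cthickening (r := 1)).isBounded.exists_norm_le
  have hκt : Tendsto κ (𝓝 0) (𝓝 1) := hκ0 ▸ hκc.tendsto 0
  obtain ⟨r₁, hr₁, h₁⟩ := Metric.tendsto_nhds_nhds.1 hκt (ε / 2) (by positivity)
  set B' := |B| + 1
  have hB' : 0 < B' := by positivity
  refine ⟨min r₁ (ε / (2 * (A + 1) * (2 * π * B'))), by positivity, fun f hf hf1 x y hxy => ?_⟩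
  obtain ⟨G, hGi, hG0, hGA, hG⟩ := H f hf 1 hf1 y
  have e1 := hG x
  have e2 := hG y
  rw [sub_self, hκ0, mul_one] at e2
  have hbd : ∀ z, Integrable (fun ξ : V => cexp (↑(2 * π * ⟪ξ, z⟫) * I) * G ξ) := by
    intro z
    refine hGi.bdd_mul (c := 1) (Continuous.aestronglyMeasurable (by fun_prop))
      (Eventually.of_forall fun ξ => ?_)
    rw [Complex.norm_exp_ofReal_mul_I]
  have h3 : ‖f x * κ (x - y) - f y‖ ≤ (2 * π * B' * dist x y) * A := by
    rw [e1, e2, ← integral_sub (hbd x) (hbd y)]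
    have : ∀ ξ, ‖cexp (↑(2 * π * ⟪ξ, x⟫) * I) * G ξ - cexp (↑(2 * π * ⟪ξ, y⟫) * I) * G ξ‖
        ≤ (2 * π * B' * dist x y) * ‖G ξ‖ := by
      intro ξ
      by_cases hξ : ξ ∈ cthickening 1 Ω
      · rw [← sub_mul, norm_mul]
        refine mul_le_mul_of_nonneg_right ?_ (norm_nonneg _)
        have : cexp (↑(2 * π * ⟪ξ, x⟫) * I) - cexp (↑(2 * π * ⟪ξ, y⟫) * I) =
            cexp (↑(2 * π * ⟪ξ, y⟫) * I) * (cexp (I * ↑(2 * π * ⟪ξ, x - y⟫)) - 1) := by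
          rw [mul_sub, ← Complex.exp_add, mul_one, inner_sub_right]
          congr 2
          push_cast
          ring
        rw [this, norm_mul, Complex.norm_exp_ofReal_mul_I, one_mul]
        refine Real.norm_exp_I_mul_ofReal_sub_one_le.trans ?_
        rw [norm_mul, Real.norm_of_nonneg (by positivity), mul_assoc (2 * π)]
        refine mul_le_mul_of_nonneg_left ?_ (by positivity)
        refine (norm_inner_le_norm _ _).trans ?_
        rw [dist_eq_norm]
        refine mul_le_mul_of_nonneg_right ?_ (norm_nonneg _)
        exact (hB ξ hξ).trans ((le_abs_self B).trans (by simp [B']))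
      · rw [hG0 ξ hξ]; simp
    refine (norm_integral_le_of_norm_le (hGi.norm.const_mul _) (Eventually.of_forall this)).trans ?_
    rw [integral_const_mul]
    refine mul_le_mul_of_nonneg_left (by simpa using hGA) (by positivity)
  have h4 : ‖f x - f x * κ (x - y)‖ < ε / 2 := by
    have : f x - f x * κ (x - y) = f x * (1 - κ (x - y)) := by ring
    rw [this, norm_mul]
    refine (mul_le_of_le_one_left (norm_nonneg _) (hf1 x)).trans_lt ?_
    have := h₁ (x := x - y) (by rw [dist_zero_right, ← dist_eq_norm]; exact hxy.trans_le (min_le_left _ _))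
    rwa [dist_comm, dist_eq_norm] at this
  have h5 : (2 * π * B' * dist x y) * A ≤ ε / 2 := by
    have hd := (hxy.trans_le (min_le_right _ _)).le
    rw [le_div_iff₀ (by positivity)] at hd
    have : 0 ≤ 2 * π * B' * dist x y := by positivity
    nlinarith
  rw [dist_eq_norm]
  calc ‖f x - f y‖ = ‖(f x - f x * κ (x - y)) + (f x * κ (x - y) - f y)‖ := by congr 1; ring
    _ ≤ _ := norm_add_le _ _
    _ < ε := by linarith

lemma circleAverage_abs_im (R : ℝ) :
    circleAverage (fun z : ℂ => |z.im|) 0 R = 2 * |R| / π := by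
  have h : ∫ θ in (0 : ℝ)..2 * π, |Real.sin θ| = 4 := by
    rw [← intervalIntegral.integral_add_adjacent_intervals (b := π)
      (Continuous.intervalIntegrable (by fun_prop) _ _)
      (Continuous.intervalIntegrable (by fun_prop) _ _)]
    have h1 : ∫ θ in (0 : ℝ)..π, |Real.sin θ| = 2 := by
      have : ∫ θ in (0 : ℝ)..π, Real.sin θ = 2 := by
        rw [integral_sin, Real.cos_zero, Real.cos_pi]
        norm_num
      rw [← this]
      refine intervalIntegral.integral_congr fun θ hθ => ?_
      rw [Set.uIcc_of_le pi_pos.le] at hθ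
      exact abs_of_nonneg (Real.sin_nonneg_of_mem_Icc hθ)
    have h2 : ∫ θ in π..2 * π, |Real.sin θ| = 2 := by
      have := intervalIntegral.integral_comp_add_right (a := 0) (b := π)
        (fun θ => |Real.sin θ|) π
      simp only [Real.sin_add_pi, abs_neg, zero_add] at this
      rw [← two_mul, h1] at this
      exact this.symm
    rw [h1, h2]
    norm_num
  have h' : ∀ θ : ℝ, |(circleMap 0 R θ).im| = |R| * |Real.sin θ| := by
    intro θ
    rw [← abs_mul]
    simp [circleMap]
  rw [circleAverage]
  simp_rw [h']
  rw [intervalIntegral.integral_const_mul, h, smul_eq_mul]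
  field_simp
  ring

/-- Jensen's inequality for entire functions of exponential type: the real zeros in a disc
are controlled by the type. -/
lemma sum_log_div_abs_le {g : ℂ → ℂ} (hg : Differentiable ℂ g) (h0 : g 0 ≠ 0) {R : ℝ}
    (hR : 0 < R) (S : Finset ℝ) (hS : ∀ t ∈ S, |t| ≤ R ∧ g t = 0) {A τ : ℝ} (hA : 1 ≤ A)
    (hτ : 0 ≤ τ) (hb : ∀ z : ℂ, ‖z‖ = R → ‖g z‖ ≤ A * Real.exp (τ * |z.im|)) :
    ∑ t ∈ S, Real.log (R / |t|) + Real.log ‖g 0‖ ≤ Real.log A + 2 * τ * R / π := by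
  have han : AnalyticOnNhd ℂ g (closedBall 0 |R|) := fun z _ => hg.analyticAt z
  have hJ := AnalyticOnNhd.circleAverage_log_norm hR.ne' han h0
  have hupper : circleAverage (fun z => Real.log ‖g z‖) 0 R ≤ Real.log A + 2 * τ * R / π := by
    calc circleAverage (fun z => Real.log ‖g z‖) 0 R
        ≤ circleAverage (fun z : ℂ => Real.log A + τ * |z.im|) 0 R := by
          apply circleAverage_mono
          · exact MeromorphicOn.circleIntegrable_log_norm
              (fun z _ => (hg.analyticAt z).meromorphicAt)
          · exact (Continuous.continuousOn (by fun_prop)).circleIntegrable hR.le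
          · intro z hz
            rw [abs_of_pos hR, mem_sphere_zero_iff_norm] at hz
            rcases eq_or_ne (g z) 0 with h | h
            · rw [h, norm_zero, Real.log_zero]
              have := Real.log_nonneg hA
              positivity
            · rw [← Real.log_exp (τ * |z.im|), ← Real.log_mul (by positivity) (by positivity)]
              exact Real.log_le_log (norm_pos_iff.2 h) (hb z hz)
      _ = Real.log A + τ * circleAverage (fun z : ℂ => |z.im|) 0 R := by
          have h1 : CircleIntegrable (fun _ : ℂ => Real.log A) 0 R := circleIntegrable_const _ _ _
          have h2 : CircleIntegrable (fun z : ℂ => τ • |z.im|) 0 R :=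
            (Continuous.continuousOn (by fun_prop)).circleIntegrable hR.le
          have := circleAverage_add h1 h2
          rw [circleAverage_const] at this
          have h3 : circleAverage (fun z : ℂ => τ • |z.im|) 0 R
            = τ • circleAverage (fun z : ℂ => |z.im|) 0 R := circleAverage_fun_smul
          rw [h3] at this
          exact this
      _ = _ := by
          rw [circleAverage_abs_im, abs_of_pos hR]
          ring
  rw [hJ] at hupper
  refine le_trans ?_ hupper
  gcongr
  set D := MeromorphicOn.divisor g (closedBall 0 |R|)
  have hfin : D.support.Finite := D.finiteSupport (isCompact_closedBall 0 _)
  rw [finsum_eq_sum_of_support_subset (s := hfin.toFinset)]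
  swap
  · intro u hu
    simp only [Set.Finite.coe_toFinset]
    intro h
    apply hu
    simp only
    rw [h]
    simp
  have hinj : Set.InjOn (fun t : ℝ => (t : ℂ)) S := fun a _ b _ h => by simpa using h
  have hDpos : ∀ t ∈ S, 1 ≤ D (t : ℂ) := by
    intro t ht
    obtain ⟨h1, h2⟩ := hS t ht
    have hmem : (t : ℂ) ∈ closedBall (0 : ℂ) |R| := by
      simpa [abs_of_pos hR] using h1
    rw [MeromorphicOn.AnalyticOnNhd.divisor_apply han hmem]
    have h3 : analyticOrderAt g t ≠ ⊤ := by
      intro htop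
      rw [analyticOrderAt_eq_top] at htop
      have := (AnalyticOnNhd.eqOn_zero_of_preconnected_of_eventuallyEq_zero
        (fun z _ => hg.analyticAt z) isPreconnected_univ (Set.mem_univ (t : ℂ)) htop)
      exact h0 (this (Set.mem_univ 0))
    have h4 : analyticOrderAt g t ≠ 0 := by
      intro h
      rw [(hg.analyticAt _).analyticOrderAt_eq_zero] at h
      exact h h2
    obtain ⟨n, hn⟩ := ENat.ne_top_iff_exists.1 h3
    rw [← hn] at h4 ⊢
    have hn0 : n ≠ 0 := by simpa using h4
    change (1 : ℤ) ≤ (n : ℤ)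
    omega
  calc ∑ t ∈ S, Real.log (R / |t|)
      ≤ ∑ t ∈ S, D (t : ℂ) * Real.log (R * ‖(0 : ℂ) - t‖⁻¹) := by
        refine Finset.sum_le_sum fun t ht => ?_
        rw [zero_sub, norm_neg, norm_real, Real.norm_eq_abs, ← div_eq_mul_inv]
        have ht0 : 0 < |t| := by
          rw [abs_pos]
          rintro rfl
          exact h0 (by simpa using (hS 0 ht).2)
        refine le_mul_of_one_le_left (Real.log_nonneg ?_) (by exact_mod_cast hDpos t ht)
        rw [one_le_div ht0]
        exact (hS t ht).1
    _ = ∑ u ∈ S.image (fun t : ℝ => (t : ℂ)), D u * Real.log (R * ‖(0 : ℂ) - u‖⁻¹) := by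
        rw [Finset.sum_image hinj]
    _ ≤ _ := by
        refine Finset.sum_le_sum_of_subset_of_nonneg ?_ ?_
        · intro u hu
          rw [Finset.mem_image] at hu
          obtain ⟨t, ht, rfl⟩ := hu
          rw [Set.Finite.mem_toFinset, Function.mem_support]
          have := hDpos t ht
          omega
        · intro u hu _
          rw [Set.Finite.mem_toFinset] at hu
          have hu' := D.supportWithinDomain hu
          refine mul_nonneg ?_ ?_
          · exact_mod_cast (MeromorphicOn.AnalyticOnNhd.divisor_nonneg han) u
          · rw [zero_sub, norm_neg, ← div_eq_mul_inv]
            rcases eq_or_ne u 0 with rfl | hu0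
            · simp
            · refine Real.log_nonneg ?_
              rw [one_le_div (norm_pos_iff.2 hu0)]
              simpa [abs_of_pos hR] using hu'

lemma finite_inter_Icc_of_separated {Λ : Set ℝ} {δ : ℝ} (hδ : 0 < δ)
    (hΛ : ∀ x ∈ Λ, ∀ y ∈ Λ, x ≠ y → δ ≤ dist x y) (a b : ℝ) :
    (Λ ∩ Set.Icc a b).Finite ∧ ((Λ ∩ Set.Icc a b).ncard : ℝ) ≤ |b - a| / δ + 2 := by
  have hinj : Set.InjOn (fun x : ℝ => ⌊x / δ⌋) (Λ ∩ Set.Icc a b) := by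
    intro x hx y hy hxy
    by_contra hne
    have h1 := hΛ x hx.1 y hy.1 hne
    have h2 := Int.abs_sub_lt_one_of_floor_eq_floor hxy
    rw [← sub_div, abs_div, abs_of_pos hδ, div_lt_one hδ] at h2
    rw [Real.dist_eq] at h1
    linarith
  have hsub : (fun x : ℝ => ⌊x / δ⌋) '' (Λ ∩ Set.Icc a b) ⊆ Set.Icc ⌊a / δ⌋ ⌊b / δ⌋ := by
    rintro _ ⟨x, hx, rfl⟩
    exact ⟨Int.floor_mono (div_le_div_of_nonneg_right hx.2.1 hδ.le),
      Int.floor_mono (div_le_div_of_nonneg_right hx.2.2 hδ.le)⟩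
  refine ⟨Set.Finite.of_finite_image ((Set.finite_Icc _ _).subset hsub) hinj, ?_⟩
  rw [← hinj.ncard_image]
  have h1 := Set.ncard_le_ncard hsub (Set.finite_Icc _ _)
  have h2 : (Set.Icc ⌊a / δ⌋ ⌊b / δ⌋).ncard = (⌊b / δ⌋ + 1 - ⌊a / δ⌋).toNat := by
    rw [Set.ncard_eq_toFinset_card', Set.toFinset_Icc, Int.card_Icc]
  rw [h2] at h1
  have h3 : (((⌊b / δ⌋ + 1 - ⌊a / δ⌋).toNat : ℤ) : ℝ) ≤ |b - a| / δ + 2 := by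
    rw [Int.toNat_eq_max]
    push_cast
    refine max_le ?_ (by positivity)
    have e1 := Int.floor_le (b / δ)
    have e2 := Int.lt_floor_add_one (a / δ)
    have e3 : b / δ - a / δ ≤ |b - a| / δ := by
      rw [← sub_div]
      exact div_le_div_of_nonneg_right (le_abs_self _) hδ.le
    linarith
  refine le_trans ?_ h3
  exact_mod_cast h1

lemma mul_sub_le_sum_log_div_abs {S : Finset ℝ} {r₀ R c : ℝ} (hr₀ : 0 < r₀) (hR : r₀ ≤ R)
    (hS : ∀ t ∈ S, |t| ≤ R ∧ t ≠ 0)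
    (hc : ∀ r, r₀ ≤ r → r ≤ R → c * r ≤ (S.filter (|·| ≤ r)).card) :
    c * (R - r₀) ≤ ∑ t ∈ S, Real.log (R / |t|) := by
  have hinv : ∀ a, 0 < a → IntegrableOn (fun t : ℝ => t⁻¹) (Set.Icc a R) := by
    intro a ha
    refine ContinuousOn.integrableOn_Icc ?_
    exact continuousOn_inv₀.mono (fun x hx => (ha.trans_le hx.1).ne')
  have hint : ∀ t : ℝ, IntegrableOn ((Set.Ici |t|).indicator (fun t : ℝ => t⁻¹))
      (Set.Ioc r₀ R) := fun t =>
    ((hinv r₀ hr₀).mono_set Set.Ioc_subset_Icc_self).indicator measurableSet_Ici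
  have h1 : ∀ t ∈ S, ∫ r in Set.Ioc r₀ R, (Set.Ici |t|).indicator (fun t : ℝ => t⁻¹) r ≤
      Real.log (R / |t|) := by
    intro t ht
    have ht0 : 0 < |t| := abs_pos.2 (hS t ht).2
    have ha : 0 < max r₀ |t| := lt_max_of_lt_left hr₀
    have haR : max r₀ |t| ≤ R := max_le hR (hS t ht).1
    rw [setIntegral_indicator measurableSet_Ici]
    calc ∫ r in Set.Ioc r₀ R ∩ Set.Ici |t|, r⁻¹
        ≤ ∫ r in Set.Icc (max r₀ |t|) R, r⁻¹ := by
          refine setIntegral_mono_set (hinv _ ha) ?_ ?_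
          · filter_upwards [ae_restrict_mem measurableSet_Icc] with r hr
            exact inv_nonneg.2 (ha.le.trans hr.1)
          · refine LE.le.eventuallyLE fun r hr => ?_
            exact ⟨max_le hr.1.1.le hr.2, hr.1.2⟩
      _ = Real.log (R / max r₀ |t|) := by
          rw [integral_Icc_eq_integral_Ioc, ← intervalIntegral.integral_of_le haR,
            integral_inv_of_pos ha (ha.trans_le haR)]
      _ ≤ Real.log (R / |t|) := by
          have : 0 < R := hr₀.trans_le hR
          refine Real.log_le_log (by positivity) ?_
          gcongr
          exact le_max_right _ _
  refine le_trans ?_ (Finset.sum_le_sum h1)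
  rw [← integral_finsetSum _ (fun t _ => hint t)]
  have h2 : c * (R - r₀) = ∫ r in Set.Ioc r₀ R, c := by
    rw [setIntegral_const, smul_eq_mul, Measure.real, Real.volume_Ioc,
      ENNReal.toReal_ofReal (by linarith)]
    ring
  rw [h2]
  refine setIntegral_mono_on (integrableOn_const (by simp)) (integrable_finsetSum _ fun t _ => hint t)
    measurableSet_Ioc fun r hr => ?_
  have hr0 : 0 < r := hr₀.trans hr.1
  have h3 : ∑ t ∈ S, (Set.Ici |t|).indicator (fun t : ℝ => t⁻¹) r
      = (S.filter (|·| ≤ r)).card * r⁻¹ := by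
    simp only [Set.indicator_apply, Set.mem_Ici]
    rw [← Finset.sum_filter, Finset.sum_const, nsmul_eq_mul]
  rw [h3, ← div_eq_mul_inv, le_div_iff₀ hr0]
  exact hc r hr.1.le hr.2

lemma exists_interpolation_bound {S : Finset ℝ} {δ R s : ℝ} {N : ℕ} (hδ : 0 < δ) (hδR : δ ≤ 2 * R)
    (hN : S.card ≤ N) (hsep : ∀ x ∈ S, ∀ y ∈ S, x ≠ y → δ ≤ dist x y) (hS : ∀ t ∈ S, |t| ≤ R)
    (F : ℂ → ℂ) (hF : ∀ t ∈ S, ‖F t‖ ≤ s) (hs : 0 ≤ s) :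
    ∃ L : ℂ → ℂ, Differentiable ℂ L ∧ (∀ t ∈ S, L t = F t) ∧
      ∀ z, ‖z‖ ≤ R → ‖L z‖ ≤ N * (2 * R / δ) ^ N * s := by
  have hinj : Set.InjOn (fun t : ℝ => (t : ℂ)) S := fun a _ b _ h => by simpa using h
  set p := Lagrange.interpolate S (fun t : ℝ => (t : ℂ)) (fun t => F t)
  have h1 : 1 ≤ 2 * R / δ := by rwa [one_le_div hδ]
  refine ⟨fun z => p.eval z, p.differentiable, fun t ht =>
    Lagrange.eval_interpolate_at_node _ hinj ht, fun z hz => ?_⟩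
  simp only [p, Lagrange.interpolate_apply, Polynomial.eval_finsetSum, Polynomial.eval_mul,
    Polynomial.eval_C]
  calc ‖∑ t ∈ S, F t * (Lagrange.basis S (fun t : ℝ => (t : ℂ)) t).eval z‖
      ≤ ∑ t ∈ S, s * (2 * R / δ) ^ N := by
        refine norm_sum_le_of_le _ fun t ht => ?_
        rw [norm_mul]
        refine mul_le_mul (hF t ht) ?_ (norm_nonneg _) hs
        rw [Lagrange.basis, Polynomial.eval_prod, norm_prod]
        calc ∏ u ∈ S.erase t, ‖(Lagrange.basisDivisor (t : ℂ) (u : ℂ)).eval z‖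
            ≤ ∏ u ∈ S.erase t, (2 * R / δ) := by
              refine Finset.prod_le_prod (fun _ _ => norm_nonneg _) fun u hu => ?_
              rw [Finset.mem_erase] at hu
              simp only [Lagrange.basisDivisor, Polynomial.eval_mul, Polynomial.eval_C,
                Polynomial.eval_sub, Polynomial.eval_X, norm_mul, norm_inv]
              have e1 : δ ≤ ‖(t : ℂ) - u‖ := by
                rw [← ofReal_sub, norm_real, ← dist_eq_norm]
                exact hsep t ht u hu.2 hu.1.symm
              have e2 : ‖z - u‖ ≤ 2 * R := by
                refine (norm_sub_le _ _).trans ?_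
                rw [norm_real, Real.norm_eq_abs]
                linarith [hS u hu.2]
              rw [mul_comm, ← div_eq_mul_inv]
              gcongr
              exact hδ.le.trans hδR
          _ = (2 * R / δ) ^ (S.erase t).card := by rw [Finset.prod_const]
          _ ≤ _ := pow_le_pow_right₀ h1 ((Finset.card_le_card (Finset.erase_subset _ _)).trans hN)
    _ = S.card * (2 * R / δ) ^ N * s := by rw [Finset.sum_const, nsmul_eq_mul]; ring
    _ ≤ _ := by gcongr

/-- A quantitative form of the sufficiency part of Beurling's sampling theorem. -/
lemma exists_lower_bound_on_dense_set {Λ : Set ℝ} {δ c r₀ A τ : ℝ} (hδ : 0 < δ)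
    (hΛ : ∀ x ∈ Λ, ∀ y ∈ Λ, x ≠ y → δ ≤ dist x y) (hr₀ : 0 < r₀)
    (hc : ∀ x r, r₀ ≤ r → c * r ≤ Nat.card ↥(Λ ∩ closedBall x r)) (hA : 1 ≤ A) (hτ : 0 ≤ τ)
    (hτc : 2 * τ / π < c) :
    ∃ ε > 0, ∀ t₀ : ℝ, ∀ F : ℂ → ℂ, Differentiable ℂ F →
      (∀ z, ‖F z‖ ≤ A * Real.exp (τ * |z.im|)) → 1 / 2 ≤ ‖F 0‖ →
      ∃ t ∈ Λ, ε < ‖F ((t - t₀ : ℝ) : ℂ)‖ := by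
  obtain ⟨R, hR₀, hRδ, hR⟩ : ∃ R, r₀ ≤ R ∧ δ ≤ 2 * R ∧
      Real.log (A + 1 / 4) + 2 * τ * R / π - Real.log (1 / 4) < c * (R - r₀) := by
    set K := Real.log (A + 1 / 4) - Real.log (1 / 4) + c * r₀
    have hd : 0 < c - 2 * τ / π := by linarith
    refine ⟨max (max r₀ δ) (|K| / (c - 2 * τ / π) + 1), ?_, ?_, ?_⟩
    · exact (le_max_left _ _).trans (le_max_left _ _)
    · have := (le_max_right r₀ δ).trans (le_max_left _ (|K| / (c - 2 * τ / π) + 1))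
      linarith
    · set R := max (max r₀ δ) (|K| / (c - 2 * τ / π) + 1)
      have h1 : |K| / (c - 2 * τ / π) < R := (lt_add_one _).trans_le (le_max_right _ _)
      rw [div_lt_iff₀ hd] at h1
      have h2 := le_abs_self K
      have h3 : 2 * τ * R / π = 2 * τ / π * R := by ring
      rw [h3]
      simp only [K] at h1 h2
      nlinarith
  have hRpos : 0 < R := hr₀.trans_le hR₀
  set N := ⌈2 * R / δ + 2⌉₊
  set B := N * (2 * R / δ) ^ N
  have hB : 0 ≤ B := by positivity
  refine ⟨1 / (4 * (B + 1)), by positivity, fun t₀ F hF hFb hF0 => ?_⟩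
  by_contra! hcon
  have hball : ∀ r, closedBall t₀ r = Set.Icc (t₀ - r) (t₀ + r) := fun r => Real.closedBall_eq_Icc
  obtain ⟨hfin, hcard⟩ := finite_inter_Icc_of_separated hδ hΛ (t₀ - R) (t₀ + R)
  set S : Finset ℝ := hfin.toFinset.image (fun t => t - t₀) with hSdef
  have hSmem : ∀ u, u ∈ S ↔ u + t₀ ∈ Λ ∧ |u| ≤ R := by
    intro u
    simp only [hSdef, Finset.mem_image, Set.Finite.mem_toFinset, Set.mem_inter_iff, Set.mem_Icc,
      abs_le]
    constructor
    · rintro ⟨t, ⟨h1, h2, h3⟩, rfl⟩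
      exact ⟨by simpa using h1, by linarith, by linarith⟩
    · rintro ⟨h1, h2, h3⟩
      exact ⟨u + t₀, ⟨h1, by linarith, by linarith⟩, by ring⟩
  have hSN : S.card ≤ N := by
    have h1 : S.card ≤ hfin.toFinset.card := Finset.card_image_le
    rw [← Set.ncard_eq_toFinset_card _ hfin] at h1
    have h2 : (S.card : ℝ) ≤ 2 * R / δ + 2 := by
      refine (Nat.cast_le.2 h1).trans (hcard.trans (le_of_eq ?_))
      rw [show t₀ + R - (t₀ - R) = 2 * R by ring, abs_of_pos (by positivity)]
    exact_mod_cast h2.trans (Nat.le_ceil _)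
  obtain ⟨L, hL, hLS, hLb⟩ := exists_interpolation_bound (S := S) hδ hRδ hSN
    (fun x hx y hy hxy => by
      have := hΛ _ ((hSmem x).1 hx).1 _ ((hSmem y).1 hy).1 (by simpa using hxy)
      simpa using this)
    (fun t ht => ((hSmem t).1 ht).2) F (s := 1 / (4 * (B + 1)))
    (fun t ht => by
      have := hcon _ ((hSmem t).1 ht).1
      simpa using this) (by positivity)
  have hLb' : ∀ z, ‖z‖ ≤ R → ‖L z‖ ≤ 1 / 4 := by
    intro z hz
    refine (hLb z hz).trans ?_
    change B * (1 / (4 * (B + 1))) ≤ 1 / 4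
    rw [mul_one_div, div_le_div_iff₀ (by positivity) (by norm_num)]
    linarith
  have hg0 : 1 / 4 ≤ ‖F 0 - L 0‖ := by
    have := norm_sub_norm_le (F 0) (L 0)
    have h2 := hLb' 0 (by simpa using hRpos.le)
    linarith
  have hg0' : F 0 - L 0 ≠ 0 := by
    rw [← norm_pos_iff]
    linarith
  have hup := sum_log_div_abs_le (g := fun z => F z - L z) (hF.sub hL) hg0' hRpos S
    (fun t ht => ⟨((hSmem t).1 ht).2, by rw [hLS t ht, sub_self]⟩)
    (A := A + 1 / 4) (τ := τ) (by linarith) hτ (fun z hz => by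
      refine (norm_sub_le _ _).trans ?_
      rw [add_mul]
      refine add_le_add (hFb z) ((hLb' z hz.le).trans ?_)
      have : 1 ≤ Real.exp (τ * |z.im|) := Real.one_le_exp (by positivity)
      linarith)
  have hlow := mul_sub_le_sum_log_div_abs (S := S) (c := c) hr₀ hR₀
    (fun t ht => ⟨((hSmem t).1 ht).2, by
      rintro rfl
      apply hg0'
      have := hLS 0 ht
      rw [ofReal_zero] at this
      rw [this, sub_self]⟩)
    (fun r hr hrR => by
      refine (hc t₀ r hr).trans ?_
      rw [Nat.card_coe_set_eq, ← Set.ncard_coe_finset,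
        ← Set.ncard_image_of_injective (Λ ∩ closedBall t₀ r) (sub_left_injective (b := t₀))]
      refine Nat.cast_le.2 (Set.ncard_le_ncard ?_ (Finset.finite_toSet _))
      rintro _ ⟨t, ⟨ht, htr⟩, rfl⟩
      rw [mem_closedBall, Real.dist_eq] at htr
      simp only [Finset.coe_filter, Set.mem_ofPred_eq, hSmem, sub_add_cancel]
      exact ⟨⟨ht, htr.trans hrR⟩, htr⟩)
  have h3 : Real.log (1 / 4) ≤ Real.log ‖F 0 - L 0‖ := Real.log_le_log (by norm_num) hg0
  linarith

/-- The Fourier integral of an integrable function supported in a slab of half-width `T` is an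
entire function of exponential type `2 * π * T` along the normal direction. -/
lemma differentiable_integral_cexp_mul {H : V → ℂ} {p : V → ℝ} {T : ℝ} (hp : Continuous p)
    (hH : Integrable H) (hT : ∀ ξ, H ξ ≠ 0 → |p ξ| ≤ T) :
    Differentiable ℂ (fun z : ℂ => ∫ ξ, cexp (2 * π * p ξ * I * z) * H ξ) ∧
      ∀ z : ℂ, ‖∫ ξ, cexp (2 * π * p ξ * I * z) * H ξ‖ ≤
        (∫ ξ, ‖H ξ‖) * Real.exp (2 * π * T * |z.im|) := by
  have hb : ∀ (ξ : V) (z : ℂ) (m : ℝ), |z.im| ≤ m →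
      ‖cexp (2 * π * p ξ * I * z) * H ξ‖ ≤ Real.exp (2 * π * T * m) * ‖H ξ‖ := by
    intro ξ z m hz
    by_cases h0 : H ξ = 0
    · simp [h0]
    rw [norm_mul]
    gcongr
    rw [norm_exp, Real.exp_le_exp]
    have e1 : (2 * π * p ξ * I * z).re = 2 * π * (- (p ξ * z.im)) := by
      simp [mul_re, mul_im]
      ring
    rw [e1, mul_assoc (2 * π) T]
    refine mul_le_mul_of_nonneg_left ?_ Real.two_pi_pos.le
    refine (neg_le_abs _).trans ?_
    rw [abs_mul]
    exact mul_le_mul (hT ξ h0) hz (abs_nonneg _) ((abs_nonneg _).trans (hT ξ h0))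
  have hmeas : ∀ z : ℂ, AEStronglyMeasurable (fun ξ => cexp (2 * π * p ξ * I * z) * H ξ) := by
    intro z
    refine AEStronglyMeasurable.mul (Continuous.aestronglyMeasurable ?_) hH.1
    fun_prop
  have hint : ∀ z : ℂ, Integrable (fun ξ => cexp (2 * π * p ξ * I * z) * H ξ) := fun z =>
    (hH.norm.const_mul (Real.exp (2 * π * T * |z.im|))).mono' (hmeas z)
      (Eventually.of_forall fun ξ => hb ξ z _ le_rfl)
  refine ⟨fun z₀ => ?_, fun z => ?_⟩
  · have := hasDerivAt_integral_of_dominated_loc_of_deriv_le (𝕜 := ℂ) (μ := (volume : Measure V))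
      (F := fun z ξ => cexp (2 * π * p ξ * I * z) * H ξ)
      (F' := fun z ξ => (2 * π * p ξ * I) * (cexp (2 * π * p ξ * I * z) * H ξ)) (x₀ := z₀)
      (bound := fun ξ => 2 * π * T * (Real.exp (2 * π * T * (|z₀.im| + 1)) * ‖H ξ‖))
      (ball_mem_nhds z₀ one_pos) (Eventually.of_forall hmeas) (hint z₀) ?_ ?_ ?_ ?_
    · exact this.2.differentiableAt
    · refine AEStronglyMeasurable.mul (Continuous.aestronglyMeasurable ?_) (hmeas z₀)
      fun_prop
    · refine Eventually.of_forall fun ξ z hz => ?_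
      by_cases h0 : H ξ = 0
      · simp [h0]
      have hz' : |z.im| ≤ |z₀.im| + 1 := by
        rw [mem_ball, dist_eq_norm] at hz
        have h1 := (abs_im_le_norm (z - z₀)).trans hz.le
        rw [sub_im] at h1
        have := abs_sub_abs_le_abs_sub z.im z₀.im
        linarith
      rw [norm_mul]
      have h2 : ‖(2 * π * p ξ * I : ℂ)‖ ≤ 2 * π * T := by
        have : ‖(2 * π * p ξ * I : ℂ)‖ = 2 * π * |p ξ| := by
          simp [abs_of_pos Real.pi_pos]
        rw [this]
        gcongr
        exact hT ξ h0
      exact mul_le_mul h2 (hb ξ z _ hz') (norm_nonneg _) ((norm_nonneg _).trans h2)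
    · exact ((hH.norm.const_mul _).const_mul _)
    · refine Eventually.of_forall fun ξ z _ => ?_
      have h1 : HasDerivAt (fun z : ℂ => 2 * π * p ξ * I * z) (2 * π * p ξ * I) z := by
        simpa using (hasDerivAt_id z).const_mul (2 * π * p ξ * I : ℂ)
      refine (h1.cexp.mul_const (H ξ)).congr_deriv ?_
      ring
  · refine (norm_integral_le_of_norm_le (hH.norm.const_mul (Real.exp (2 * π * T * |z.im|)))
      (Eventually.of_forall fun ξ => hb ξ z _ le_rfl)).trans (le_of_eq ?_)
    rw [integral_const_mul, mul_comm]

lemma exists_card_lower_bound {Λ : Set ℝ} {σ : ℝ} (h : σ < lowerUniformDensity Λ) :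
    ∃ D, σ < D ∧ ∃ r₀ > 0, ∀ x r, r₀ ≤ r → 2 * D * r ≤ Nat.card ↥(Λ ∩ closedBall x r) := by
  obtain ⟨D, hD, hDl⟩ := exists_between h
  have hbdd : ∀ r : ℝ, BddBelow (Set.range fun x : ℝ =>
      (Nat.card ↥(Λ ∩ closedBall x r) : ℝ) / (volume (closedBall x r)).toReal) := by
    intro r
    refine ⟨0, ?_⟩
    rintro _ ⟨x, rfl⟩
    positivity
  have hev := eventually_lt_of_lt_liminf hDl (by
    refine ⟨0, ?_⟩
    rw [eventually_map]
    exact Eventually.of_forall fun r => Real.iInf_nonneg fun x => by positivity)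
  obtain ⟨r₀, hr₀⟩ := eventually_atTop.1 hev
  refine ⟨D, hD, max r₀ 1, by positivity, fun x r hr => ?_⟩
  have hr0 : 0 < r := one_pos.trans_le ((le_max_right _ _).trans hr)
  have h1 := (hr₀ r ((le_max_left _ _).trans hr)).le.trans (ciInf_le (hbdd r) x)
  rw [Real.volume_closedBall, ENNReal.toReal_ofReal (by positivity),
    le_div_iff₀ (by positivity)] at h1
  linarith

lemma exists_separation_union_neg {Q : Set ℝ} (hQpos : Q ⊆ Set.Ioi 0) (hQ : UniformlyDiscrete Q) :
    ∃ δ > 0, ∀ x ∈ Q ∪ -Q, ∀ y ∈ Q ∪ -Q, x ≠ y → δ ≤ dist x y := by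
  obtain ⟨δ, hδ, hsep⟩ := hQ
  obtain ⟨β, hβ, hβQ⟩ : ∃ β > 0, ∀ q ∈ Q, β ≤ q := by
    by_cases h : ∃ q₀ ∈ Q, q₀ < δ / 2
    · obtain ⟨q₀, hq₀, hlt⟩ := h
      refine ⟨q₀, hQpos hq₀, fun q hq => ?_⟩
      by_contra! hlt'
      have h1 := hsep q₀ hq₀ q hq hlt'.ne'
      have h2 : 0 < q := hQpos hq
      rw [Real.dist_eq, abs_of_pos (by linarith)] at h1
      linarith
    · push Not at h
      exact ⟨δ / 2, by positivity, h⟩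
  refine ⟨min δ (2 * β), by positivity, ?_⟩
  rintro x (hx | hx) y (hy | hy) hxy
  · exact (min_le_left _ _).trans (hsep x hx y hy hxy)
  · have h1 := hβQ _ hx
    have h2 := hβQ _ (Set.mem_neg.1 hy)
    refine (min_le_right _ _).trans ?_
    rw [Real.dist_eq]
    exact le_trans (by linarith) (le_abs_self _)
  · have h1 := hβQ _ (Set.mem_neg.1 hx)
    have h2 := hβQ _ hy
    refine (min_le_right _ _).trans ?_
    rw [Real.dist_eq]
    exact le_trans (by linarith) (neg_le_abs _)
  · have := hsep _ (Set.mem_neg.1 hx) _ (Set.mem_neg.1 hy) (by simpa using hxy)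
    rw [dist_neg_neg] at this
    exact (min_le_left _ _).trans this

lemma exists_abs_inner_sub_le_half_diam {E : Type*} [NormedAddCommGroup E]
    [InnerProductSpace ℝ E] {Ω : Set E} (hΩ : IsCompact Ω) {w : E} (hw : ‖w‖ = 1) :
    ∃ c : ℝ, ∀ ξ ∈ Ω, |⟪ξ, w⟫ - c| ≤ Metric.diam Ω / 2 := by
  rcases Ω.eq_empty_or_nonempty with rfl | hne
  · exact ⟨0, by simp⟩
  have hcont : ContinuousOn (fun ξ : E => ⟪ξ, w⟫) Ω := by fun_prop
  obtain ⟨a, ha, hamin⟩ := hΩ.exists_isMinOn hne hcont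
  obtain ⟨b, hb, hbmax⟩ := hΩ.exists_isMaxOn hne hcont
  refine ⟨(⟪a, w⟫ + ⟪b, w⟫) / 2, fun ξ hξ => ?_⟩
  have h1 : ⟪a, w⟫ ≤ ⟪ξ, w⟫ := hamin hξ
  have h2 : ⟪ξ, w⟫ ≤ ⟪b, w⟫ := hbmax hξ
  have h3 : ⟪b, w⟫ - ⟪a, w⟫ ≤ Metric.diam Ω := by
    rw [← inner_sub_left]
    refine (real_inner_le_norm _ _).trans ?_
    rw [hw, mul_one, ← dist_eq_norm]
    exact Metric.dist_le_diam_of_mem hΩ.isBounded hb ha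
  rw [abs_le]
  constructor <;> linarith

/-- If the diameter of `Ω` is smaller than the lower density of `Q ∪ -Q`, then the union of the
concentric spheres with radii in `Q` is a sampling set for the Bernstein space of `Ω`. -/
theorem isSamplingSet_of_diam_lt {Ω P : Set V} (hΩ : IsCompact Ω) {Q : Set ℝ}
    (hQpos : Q ⊆ Set.Ioi 0) (hQ : UniformlyDiscrete Q)
    (hP : P = ⋃ q ∈ Q, sphere (0 : V) q)
    (hd : Metric.diam Ω < lowerUniformDensity (Q ∪ -Q)) (hV : ∃ v : V, v ≠ 0) :
    IsSamplingSet Ω P := by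
  obtain ⟨δ, hδ, hsep⟩ := exists_separation_union_neg hQpos hQ
  obtain ⟨D, hD, r₀, hr₀, hcard⟩ := exists_card_lower_bound hd
  obtain ⟨d, hd0, hdD⟩ : ∃ d > 0, Metric.diam Ω + 2 * d < D :=
    ⟨(D - Metric.diam Ω) / 4, by linarith, by linarith⟩
  have hσ : 0 ≤ Metric.diam Ω := Metric.diam_nonneg
  obtain ⟨A, hA, κ, -, hκ0, hκ1, hκ⟩ := exists_bandlimited_window hΩ hd0
  obtain ⟨ε, hε, hmain⟩ := exists_lower_bound_on_dense_set (A := max A 1)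
    (τ := 2 * π * (Metric.diam Ω / 2 + d)) (c := 2 * D) hδ hsep hr₀ hcard (le_max_right _ _)
    (by positivity) (by
      rw [show 2 * (2 * π * (Metric.diam Ω / 2 + d)) / π = 2 * (Metric.diam Ω + 2 * d) by
        field_simp]
      linarith)
  obtain ⟨w₀, hw₀⟩ : ∃ w : V, ‖w‖ = 1 := by
    obtain ⟨v, hv⟩ := hV
    exact ⟨‖v‖⁻¹ • v, by rw [norm_smul, norm_inv, norm_norm, inv_mul_cancel₀ (norm_ne_zero_iff.2 hv)]⟩
  refine ⟨1 / ε, by positivity, fun f hf y => ?_⟩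
  obtain ⟨K, hK⟩ := hf.2.1
  have hbdd : BddAbove (Set.range fun x => ‖f x‖) := ⟨K, by rintro _ ⟨x, rfl⟩; exact hK x⟩
  have hbddP : BddAbove ((fun p => ‖f p‖) '' P) := hbdd.mono (Set.image_subset_range _ _)
  set M := ⨆ x, ‖f x‖
  have hM : ∀ x, ‖f x‖ ≤ M := fun x => le_ciSup hbdd x
  refine (hM y).trans ?_
  have hM0 : 0 ≤ M := Real.iSup_nonneg fun x => norm_nonneg (f x)
  have hMlt : ∀ a < M, ∃ x, a < ‖f x‖ := fun a ha => exists_lt_of_lt_ciSup ha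
  clear_value M
  have hsup0 : 0 ≤ sSup ((fun p => ‖f p‖) '' P) := Real.sSup_nonneg (by
    rintro _ ⟨x, -, rfl⟩; positivity)
  rcases hM0.eq_or_lt with hM0 | hM0
  · rw [← hM0]
    positivity
  obtain ⟨x, hx⟩ : ∃ x, M / 2 < ‖f x‖ := hMlt _ (by linarith)
  obtain ⟨w, t₀, hw, rfl⟩ : ∃ (w : V) (t₀ : ℝ), ‖w‖ = 1 ∧ x = t₀ • w := by
    by_cases hx0 : x = 0
    · exact ⟨w₀, 0, hw₀, by simp [hx0]⟩
    · have := norm_ne_zero_iff.2 hx0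
      exact ⟨‖x‖⁻¹ • x, ‖x‖, by rw [norm_smul, norm_inv, norm_norm, inv_mul_cancel₀ this],
        by rw [smul_smul, mul_inv_cancel₀ this, one_smul]⟩
  obtain ⟨c, hc⟩ := exists_abs_inner_sub_le_half_diam hΩ hw
  obtain ⟨G, hGint, hGsupp, hGA, hGf⟩ := hκ f hf M hM (t₀ • w)
  set H : V → ℂ := fun ξ => cexp (↑(2 * π * ⟪ξ, t₀ • w⟫) * I) * G ξ
  have hHn : ∀ ξ, ‖H ξ‖ = ‖G ξ‖ := fun ξ => by rw [norm_mul, norm_exp_ofReal_mul_I, one_mul]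
  have hHint : Integrable H := by
    refine hGint.mono (AEStronglyMeasurable.mul (Continuous.aestronglyMeasurable ?_) hGint.1)
      (Eventually.of_forall fun ξ => (hHn ξ).le)
    fun_prop
  have hHsupp : ∀ ξ, H ξ ≠ 0 → |⟪ξ, w⟫ - c| ≤ Metric.diam Ω / 2 + d := by
    intro ξ hξ
    have hG : G ξ ≠ 0 := by
      intro h
      exact hξ (by simp [H, h])
    have hmem : ξ ∈ cthickening d Ω := by
      by_contra h
      exact hG (hGsupp ξ h)
    rw [hΩ.cthickening_eq_biUnion_closedBall hd0.le] at hmem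
    obtain ⟨ζ, hζ, hξζ⟩ := Set.mem_iUnion₂.1 hmem
    have h1 := hc ζ hζ
    have h2 : |⟪ξ, w⟫ - ⟪ζ, w⟫| ≤ d := by
      rw [← inner_sub_left]
      refine (abs_real_inner_le_norm _ _).trans ?_
      rw [hw, mul_one, ← dist_eq_norm]
      exact hξζ
    calc |⟪ξ, w⟫ - c| ≤ |⟪ξ, w⟫ - ⟪ζ, w⟫| + |⟪ζ, w⟫ - c| := abs_sub_le _ _ _
      _ ≤ _ := by linarith
  obtain ⟨hdiff, hgrow⟩ := differentiable_integral_cexp_mul (p := fun ξ => ⟪ξ, w⟫ - c)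
    (by fun_prop) hHint hHsupp
  have hreal : ∀ t : ℝ, ‖∫ ξ, cexp (2 * π * (⟪ξ, w⟫ - c : ℝ) * I * (t : ℂ)) * H ξ‖ =
      ‖f ((t + t₀) • w) * κ ((t + t₀) • w - t₀ • w)‖ := by
    intro t
    rw [hGf, ← one_mul ‖∫ ξ, cexp (↑(2 * π * ⟪ξ, (t + t₀) • w⟫) * I) * G ξ‖,
      ← norm_exp_ofReal_mul_I (-(2 * π * c * t)), ← norm_mul, ← integral_const_mul]
    congr 2
    funext ξ
    simp only [H]
    rw [← mul_assoc, ← mul_assoc, ← Complex.exp_add, ← Complex.exp_add]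
    congr 2
    simp only [inner_smul_right]
    push_cast
    ring
  obtain ⟨t, ht, hεt⟩ := hmain t₀
    (fun z => (M⁻¹ : ℝ) * ∫ ξ, cexp (2 * π * (⟪ξ, w⟫ - c : ℝ) * I * z) * H ξ)
    (hdiff.const_mul _) (fun z => by
      rw [norm_mul, norm_real, Real.norm_eq_abs, abs_of_pos (by positivity)]
      calc M⁻¹ * ‖∫ ξ, cexp (2 * π * (⟪ξ, w⟫ - c : ℝ) * I * z) * H ξ‖
          ≤ M⁻¹ * ((A * M) * Real.exp (2 * π * (Metric.diam Ω / 2 + d) * |z.im|)) := by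
            refine mul_le_mul_of_nonneg_left ((hgrow z).trans ?_) (by positivity)
            simp only [hHn]
            gcongr
        _ = A * Real.exp (2 * π * (Metric.diam Ω / 2 + d) * |z.im|) := by
            field_simp
        _ ≤ _ := by
            gcongr
            exact le_max_left _ _) (by
      rw [norm_mul, norm_real, Real.norm_eq_abs, abs_of_pos (by positivity)]
      have := hreal 0
      rw [ofReal_zero, zero_add, sub_self, hκ0, mul_one] at this
      rw [this, inv_mul_eq_div, le_div_iff₀ hM0]
      linarith)
  rw [norm_mul, norm_real, Real.norm_eq_abs, abs_of_pos (by positivity), hreal, sub_add_cancel,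
    inv_mul_eq_div, lt_div_iff₀ hM0, norm_mul] at hεt
  have hmemP : t • w ∈ P := by
    rw [hP]
    rcases ht with ht | ht
    · refine Set.mem_iUnion₂.2 ⟨t, ht, ?_⟩
      rw [mem_sphere_zero_iff_norm, norm_smul, hw, mul_one, Real.norm_eq_abs,
        abs_of_pos (hQpos ht)]
    · refine Set.mem_iUnion₂.2 ⟨-t, ht, ?_⟩
      have : 0 < -t := hQpos ht
      rw [mem_sphere_zero_iff_norm, norm_smul, hw, mul_one, Real.norm_eq_abs,
        abs_of_neg (by linarith)]
  have h1 : ‖f (t • w)‖ ≤ sSup ((fun p => ‖f p‖) '' P) := le_csSup hbddP ⟨_, hmemP, rfl⟩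
  have h2 : ‖f (t • w)‖ * ‖κ (t • w - t₀ • w)‖ ≤ ‖f (t • w)‖ :=
    mul_le_of_le_one_right (norm_nonneg _) (hκ1 _)
  rw [one_div, inv_mul_eq_div, le_div_iff₀ hε]
  linarith

lemma le_card_inter_Icc_of_le_card_Ico {Q : Set ℝ} {δ D ℓ X : ℝ} (hδ : 0 < δ)
    (hQ : ∀ x ∈ Q, ∀ y ∈ Q, x ≠ y → δ ≤ dist x y) (hD : 0 ≤ D) (hℓ : 0 < ℓ)
    (h : ∀ x ≥ X, D * ℓ ≤ (Q ∩ Set.Ico x (x + ℓ)).ncard) {a : ℝ} (ha : X ≤ a) (b : ℝ) :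
    D * (b - a - ℓ) ≤ (Q ∩ Set.Icc a b).ncard := by
  have hfin : ∀ a b, (Q ∩ Set.Ico a b).Finite := fun a b =>
    (finite_inter_Icc_of_separated hδ hQ a b).1.subset
      (Set.inter_subset_inter_right _ Set.Ico_subset_Icc_self)
  have hind : ∀ n : ℕ, D * ℓ * n ≤ (Q ∩ Set.Ico a (a + n * ℓ)).ncard := by
    intro n
    induction n with
    | zero => simp
    | succ n ih =>
      have hn : 0 ≤ n * ℓ := by positivity
      have hu : Q ∩ Set.Ico a (a + (n + 1 : ℕ) * ℓ) =
          (Q ∩ Set.Ico a (a + n * ℓ)) ∪ (Q ∩ Set.Ico (a + n * ℓ) (a + n * ℓ + ℓ)) := by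
        rw [← Set.inter_union_distrib_left, Set.Ico_union_Ico_eq_Ico (by linarith) (by linarith)]
        push_cast
        ring_nf
      have hdis : Disjoint (Q ∩ Set.Ico a (a + n * ℓ))
          (Q ∩ Set.Ico (a + n * ℓ) (a + n * ℓ + ℓ)) :=
        Set.disjoint_left.2 fun x h1 h2 => absurd h1.2.2 (not_lt.2 h2.2.1)
      rw [hu, Set.ncard_union_eq hdis (hfin _ _) (hfin _ _)]
      have := h (a + n * ℓ) (by linarith)
      push_cast
      linarith
  rcases le_or_gt (b - a) 0 with hba | hba
  · refine le_trans ?_ (Nat.cast_nonneg _)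
    exact mul_nonpos_of_nonneg_of_nonpos hD (by linarith)
  set n := ⌊(b - a) / ℓ⌋₊
  have h1 : n ≤ (b - a) / ℓ := Nat.floor_le (by positivity)
  have h2 : (b - a) / ℓ < n + 1 := Nat.lt_floor_add_one _
  rw [le_div_iff₀ hℓ] at h1
  rw [div_lt_iff₀ hℓ] at h2
  calc D * (b - a - ℓ) ≤ D * (ℓ * n) := mul_le_mul_of_nonneg_left (by linarith) hD
    _ = D * ℓ * n := by ring
    _ ≤ (Q ∩ Set.Ico a (a + n * ℓ)).ncard := hind n
    _ ≤ _ := by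
        refine Nat.cast_le.2 (Set.ncard_le_ncard (Set.inter_subset_inter_right _ ?_)
          (finite_inter_Icc_of_separated hδ hQ a b).1)
        exact fun x hx => ⟨hx.1, by linarith [hx.2]⟩

lemma le_lowerUniformDensity {Λ : Set ℝ} {δ : ℝ} (hδ : 0 < δ)
    (hΛ : ∀ x ∈ Λ, ∀ y ∈ Λ, x ≠ y → δ ≤ dist x y) {a : ℝ}
    (h : ∀ᶠ r : ℝ in atTop, ∀ x, a * (2 * r) ≤ (Λ ∩ Set.Icc (x - r) (x + r)).ncard) :
    a ≤ lowerUniformDensity Λ := by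
  have hvol : ∀ x r : ℝ, 0 < r → (volume (closedBall x r)).toReal = 2 * r := fun x r hr => by
    rw [Real.volume_closedBall, ENNReal.toReal_ofReal (by positivity)]
  refine le_liminf_of_le ?_ ?_
  · refine IsBoundedUnder.isCoboundedUnder_ge ⟨1 / δ + 1, ?_⟩
    rw [eventually_map]
    filter_upwards [eventually_ge_atTop 1] with r hr
    have hr0 : 0 < r := by linarith
    refine (ciInf_le ⟨0, ?_⟩ (0 : ℝ)).trans ?_
    · rintro _ ⟨x, rfl⟩
      positivity
    have h1 := (finite_inter_Icc_of_separated hδ hΛ (0 - r) (0 + r)).2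
    rw [hvol _ _ hr0, div_le_iff₀ (by positivity), Real.closedBall_eq_Icc, Nat.card_coe_set_eq]
    refine h1.trans ?_
    rw [show 0 + r - (0 - r) = 2 * r by ring, abs_of_pos (by positivity)]
    have : 2 * r / δ = 1 / δ * (2 * r) := by ring
    rw [this, add_mul]
    linarith
  · filter_upwards [h, eventually_gt_atTop 0] with r hr hr0
    refine le_ciInf fun x => ?_
    rw [hvol _ _ hr0, le_div_iff₀ (by positivity), Real.closedBall_eq_Icc, Nat.card_coe_set_eq]
    exact hr x

/-- If the density of `Q ∪ -Q` is at most `σ`, then there are arbitrarily far away intervals of any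
prescribed length containing few points of `Q`. -/
lemma exists_sparse_interval {Q : Set ℝ} (hQpos : Q ⊆ Set.Ioi 0) (hQ : UniformlyDiscrete Q)
    {σ η ℓ : ℝ} (hσ : lowerUniformDensity (Q ∪ -Q) ≤ σ) (hη : 0 < η) (hℓ : 0 < ℓ) (X : ℝ) :
    ∃ x ≥ X, ((Q ∩ Set.Ico x (x + ℓ)).ncard : ℝ) < (σ + η) * ℓ := by
  wlog hX : 0 ≤ X generalizing X
  · obtain ⟨x, hx, h⟩ := this 0 le_rfl
    exact ⟨x, by linarith, h⟩
  obtain ⟨δ, hδ, hsep⟩ := exists_separation_union_neg hQpos hQ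
  have hfin : ∀ a b, ((Q ∪ -Q) ∩ Set.Icc a b).Finite := fun a b =>
    (finite_inter_Icc_of_separated hδ hsep a b).1
  have hσ0 : 0 ≤ σ := by
    refine le_trans (le_lowerUniformDensity hδ hsep ?_) hσ
    exact Eventually.of_forall fun r x => by simp
  by_contra! hcon
  set D := σ + η with hDdef
  have hD : 0 ≤ D := by positivity
  have hpos := fun a ha b => le_card_inter_Icc_of_le_card_Ico (a := a) hδ
    (fun x hx y hy => hsep x (Or.inl hx) y (Or.inl hy)) hD hℓ hcon ha b
  have hneg : ∀ b ≤ -X, ∀ a, D * (b - a - ℓ) ≤ (-Q ∩ Set.Icc a b).ncard := by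
    intro b hb a
    have h1 := hpos (-b) (by linarith) (-a)
    have h2 : -Q ∩ Set.Icc a b = -(Q ∩ Set.Icc (-b) (-a)) := by
      ext x
      simp only [Set.mem_inter_iff, Set.mem_neg, Set.mem_Icc, neg_le_neg_iff]
      tauto
    rw [h2, ← Set.image_neg_eq_neg, Set.ncard_image_of_injective _ neg_injective]
    linarith
  have hcount : ∀ r x : ℝ, 0 ≤ r →
      D * (2 * r - 2 * X - 2 * ℓ) ≤ ((Q ∪ -Q) ∩ Set.Icc (x - r) (x + r)).ncard := by
    intro r x hr
    rcases le_or_gt X (x - r) with h1 | h1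
    · refine le_trans ?_ ((hpos _ h1 (x + r)).trans (Nat.cast_le.2 (Set.ncard_le_ncard
        (Set.inter_subset_inter_left _ Set.subset_union_left) (hfin _ _))))
      exact mul_le_mul_of_nonneg_left (by linarith) hD
    rcases le_or_gt (x + r) (-X) with h2 | h2
    · refine le_trans ?_ ((hneg _ h2 (x - r)).trans (Nat.cast_le.2 (Set.ncard_le_ncard
        (Set.inter_subset_inter_left _ Set.subset_union_right) (hfin _ _))))
      exact mul_le_mul_of_nonneg_left (by linarith) hD
    have h3 := hpos X le_rfl (x + r)
    have h4 := hneg (-X) le_rfl (x - r)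
    have hsub : Q ∩ Set.Icc X (x + r) ∪ -Q ∩ Set.Icc (x - r) (-X) ⊆
        (Q ∪ -Q) ∩ Set.Icc (x - r) (x + r) := by
      rintro y (⟨hy, hy1, hy2⟩ | ⟨hy, hy1, hy2⟩)
      · exact ⟨Or.inl hy, by linarith, hy2⟩
      · exact ⟨Or.inr hy, hy1, by linarith⟩
    have hdis : Disjoint (Q ∩ Set.Icc X (x + r)) (-Q ∩ Set.Icc (x - r) (-X)) := by
      refine Set.disjoint_left.2 fun y hy1 hy2 => ?_
      have e1 : 0 < y := hQpos hy1.1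
      have e2 : 0 < -y := hQpos hy2.1
      linarith
    have h5 := Set.ncard_le_ncard hsub (hfin _ _)
    rw [Set.ncard_union_eq hdis ((hfin _ _).subset (Set.subset_union_left.trans hsub))
      ((hfin _ _).subset (Set.subset_union_right.trans hsub))] at h5
    have h6 : ((Q ∩ Set.Icc X (x + r)).ncard : ℝ) + (-Q ∩ Set.Icc (x - r) (-X)).ncard ≤
        ((Q ∪ -Q) ∩ Set.Icc (x - r) (x + r)).ncard := by exact_mod_cast h5
    linarith
  have : σ + η / 2 ≤ lowerUniformDensity (Q ∪ -Q) := by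
    refine le_lowerUniformDensity hδ hsep ?_
    filter_upwards [eventually_ge_atTop 0, eventually_ge_atTop (2 * D * (X + ℓ) / η)]
      with r hr0 hr x
    refine le_trans ?_ (hcount r x hr0)
    rw [div_le_iff₀ hη] at hr
    rw [hDdef] at hr ⊢
    linarith
  linarith

lemma abs_sinc_mul_abs_le_one (x : ℝ) : |sinc x| * |x| ≤ 1 := by
  rcases eq_or_ne x 0 with rfl | hx
  · simp
  · rw [sinc_of_ne_zero hx, abs_div, div_mul_cancel₀ _ (abs_ne_zero.2 hx)]
    exact abs_sin_le_one x

lemma tendsto_sinc_cocompact : Tendsto sinc (cocompact ℝ) (𝓝 0) := by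
  refine squeeze_zero_norm' (a := fun x => ‖x‖⁻¹) ?_ (tendsto_norm_cocompact_atTop.inv_tendsto_atTop)
  filter_upwards [(tendsto_norm_cocompact_atTop (E := ℝ)).eventually_gt_atTop 0] with x hx
  rw [← one_div, le_div_iff₀ hx]
  exact abs_sinc_mul_abs_le_one x

/-- A combination of cardinal functions vanishing on fewer points than there are nodes. -/
lemma exists_combination_eq_zero {φ : ℝ → ℝ} (hφ : ∀ t, |φ t| ≤ 1) {m : ℕ} (p : Fin m → ℝ)
    (hp : ∀ i j, φ (p i - p j) = if i = j then 1 else 0) (S : Finset ℝ) (hS : S.card < m) :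
    ∃ a : Fin m → ℝ, (∀ i, |a i| ≤ 1) ∧ (∀ t, |∑ i, a i * φ (t - p i)| ≤ 1) ∧
      (∃ t, 1 / 2 ≤ |∑ i, a i * φ (t - p i)|) ∧ ∀ q ∈ S, ∑ i, a i * φ (q - p i) = 0 := by
  let T : (Fin m → ℝ) →ₗ[ℝ] (S → ℝ) :=
    { toFun := fun a q => ∑ i, a i * φ (q - p i)
      map_add' := fun a b => by
        funext q
        simp [add_mul, Finset.sum_add_distrib]
      map_smul' := fun c a => by
        funext q
        simp [mul_assoc, Finset.mul_sum] }
  have hT : LinearMap.ker T ≠ ⊥ := T.ker_ne_bot_of_finrank_lt (by simpa using hS)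
  obtain ⟨a, ha, ha0⟩ := (Submodule.ne_bot_iff _).1 hT
  set g : ℝ → ℝ := fun t => ∑ i, a i * φ (t - p i)
  have hgb : BddAbove (Set.range fun t => |g t|) := by
    refine ⟨∑ i, |a i|, ?_⟩
    rintro _ ⟨t, rfl⟩
    refine (Finset.abs_sum_le_sum_abs _ _).trans (Finset.sum_le_sum fun i _ => ?_)
    rw [abs_mul]
    exact mul_le_of_le_one_right (abs_nonneg _) (hφ _)
  set M := ⨆ t, |g t|
  have hM : ∀ t, |g t| ≤ M := fun t => le_ciSup hgb t
  have hlt : ∀ b < M, ∃ t, b < |g t| := fun b hb => exists_lt_of_lt_ciSup hb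
  clear_value M
  have haM : ∀ i, |a i| ≤ M := by
    intro i
    have : g (p i) = a i := by simp [g, hp]
    rw [← this]
    exact hM _
  obtain ⟨i₀, hi₀⟩ : ∃ i, a i ≠ 0 := by
    by_contra! h
    exact ha0 (funext h)
  have hM0 : 0 < M := (abs_pos.2 hi₀).trans_le (haM i₀)
  have hscale : ∀ t, ∑ i, a i / M * φ (t - p i) = g t / M := by
    intro t
    rw [Finset.sum_div]
    exact Finset.sum_congr rfl fun i _ => by ring
  refine ⟨fun i => a i / M, fun i => ?_, fun t => ?_, ?_, fun q hq => ?_⟩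
  · rw [abs_div, abs_of_pos hM0, div_le_one hM0]
    exact haM i
  · rw [hscale, abs_div, abs_of_pos hM0, div_le_one hM0]
    exact hM t
  · obtain ⟨t, ht⟩ := hlt (M / 2) (by linarith)
    refine ⟨t, ?_⟩
    rw [hscale, abs_div, abs_of_pos hM0, le_div_iff₀ hM0]
    linarith
  · have := congrFun (LinearMap.mem_ker.1 ha) ⟨q, hq⟩
    have h2 : g q = 0 := this
    rw [hscale, h2, zero_div]

/-- If `Q ∪ -Q` has density at most `σ`, then arbitrarily far out there is a combination of
translates of `sinc (π s ·) sinc (π δ ·)` which is small on `Q` near an interval and small away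
from the interval. -/
lemma exists_combination_small {Q : Set ℝ} (hQpos : Q ⊆ Set.Ioi 0) (hQ : UniformlyDiscrete Q)
    {σ η s δ ε : ℝ} (hσ : lowerUniformDensity (Q ∪ -Q) ≤ σ) (hη : 0 < η) (hs : σ + η < s)
    (hs0 : 0 < s) (hδ : 0 < δ) (hε : 0 < ε) (Y : ℝ) :
    ∃ (m : ℕ) (a p : Fin m → ℝ),
      let g : ℝ → ℝ := fun t => ∑ i, a i * (sinc (π * (s * (t - p i))) * sinc (π * (δ * (t - p i))))
      (∀ t, |g t| ≤ 1) ∧ (∃ t, 1 / 2 ≤ |g t|) ∧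
        ∀ q ∈ Q, ∀ t y, t ^ 2 + y ^ 2 = q ^ 2 → |y| ≤ Y → |g t| ≤ ε := by
  set φ : ℝ → ℝ := fun t => sinc (π * (s * t)) * sinc (π * (δ * t)) with hφdef
  have hφ1 : ∀ t, |φ t| ≤ 1 := fun t => by
    rw [hφdef, abs_mul]
    exact mul_le_one₀ (abs_sinc_le_one _) (abs_nonneg _) (abs_sinc_le_one _)
  have hφd : ∀ t, |φ t| * (π ^ 2 * s * δ * t ^ 2) ≤ 1 := by
    intro t
    have h1 := abs_sinc_mul_abs_le_one (π * (s * t))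
    have h2 := abs_sinc_mul_abs_le_one (π * (δ * t))
    have h3 := mul_le_one₀ h1 (by positivity) h2
    refine le_of_eq_of_le ?_ h3
    simp only [hφdef, abs_mul, abs_of_pos Real.pi_pos, abs_of_pos hs0, abs_of_pos hδ]
    rw [← sq_abs t]
    ring
  have hφu : UniformContinuous φ := by
    have hc : Continuous φ := by
      refine (continuous_sinc.comp ?_).mul (continuous_sinc.comp ?_) <;> fun_prop
    refine hc.uniformContinuous_of_tendsto_cocompact (x := 0) ?_
    refine squeeze_zero_norm (a := fun t => |sinc (π * s * t)|) (fun t => ?_) ?_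
    · rw [hφdef, norm_mul, Real.norm_eq_abs, Real.norm_eq_abs, mul_assoc π s t]
      exact mul_le_of_le_one_right (abs_nonneg _) (abs_sinc_le_one _)
    · have h1 : Tendsto (fun t : ℝ => π * s * t) (cocompact ℝ) (cocompact ℝ) :=
        tendsto_cocompact_mul_left₀ (by positivity)
      simpa using (tendsto_sinc_cocompact.comp h1).abs
  obtain ⟨θ, hθ, hθs⟩ : ∃ θ > 0, (σ + η) * (1 / s + 2 * θ) ≤ 1 := by
    rcases le_or_gt (σ + η) 0 with h | h
    · exact ⟨1, one_pos, (mul_nonpos_of_nonpos_of_nonneg h (by positivity)).trans one_pos.le⟩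
    · refine ⟨(1 / (σ + η) - 1 / s) / 2, ?_, le_of_eq ?_⟩
      · have := one_div_lt_one_div_of_lt h hs
        linarith
      · field_simp
        ring
  obtain ⟨m, hm0, hm⟩ : ∃ m : ℕ, 0 < m ∧ 1 ≤ ε / 2 * (π ^ 2 * s * δ * θ ^ 2 * m) := by
    obtain ⟨m, hm⟩ := exists_nat_ge (1 / (ε / 2 * (π ^ 2 * s * δ * θ ^ 2)))
    rw [div_le_iff₀ (by positivity)] at hm
    refine ⟨m, ?_, by linarith⟩
    rcases Nat.eq_zero_or_pos m with h | h
    · rw [h] at hm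
      norm_num at hm
    · exact h
  have hm0' : (0 : ℝ) < m := Nat.cast_pos.2 hm0
  set ρ := θ * m
  set ℓ := m / s + 2 * ρ
  have hρ : 0 < ρ := by positivity
  have hℓ : 0 < ℓ := by positivity
  obtain ⟨r, hr, hφr⟩ := Metric.uniformContinuous_iff.1 hφu (ε / (2 * m)) (by positivity)
  obtain ⟨x, hxX, hcard⟩ := exists_sparse_interval hQpos hQ hσ hη hℓ (max 1 (Y ^ 2 / r + 1))
  have hx1 : 1 ≤ x := (le_max_left _ _).trans hxX
  have hxY : Y ^ 2 < r * x := by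
    have : Y ^ 2 / r < x := (lt_add_one _).trans_le ((le_max_right _ _).trans hxX)
    rw [div_lt_iff₀ hr] at this
    linarith
  obtain ⟨δQ, hδQ, hsep⟩ := hQ
  have hfin : (Q ∩ Set.Ico x (x + ℓ)).Finite :=
    (finite_inter_Icc_of_separated hδQ hsep x (x + ℓ)).1.subset
      (Set.inter_subset_inter_right _ Set.Ico_subset_Icc_self)
  have hcardm : hfin.toFinset.card < m := by
    rw [← Set.ncard_eq_toFinset_card _ hfin]
    have h1 : (σ + η) * ℓ ≤ m := by
      have : (σ + η) * ℓ = (σ + η) * (1 / s + 2 * θ) * m := by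
        simp only [ℓ, ρ]
        ring
      rw [this]
      exact mul_le_of_le_one_left hm0'.le hθs
    exact_mod_cast hcard.trans_le h1
  set p : Fin m → ℝ := fun i => x + ρ + i / s
  obtain ⟨a, ha1, hg1, hg2, hgS⟩ := exists_combination_eq_zero hφ1 p (fun i j => by
    split_ifs with hij
    · simp [hij, hφdef]
    · have h1 : π * (s * (p i - p j)) = ((i : ℤ) - (j : ℤ) : ℤ) * π := by
        simp only [p]
        push_cast
        field_simp
        ring
      have h2 : ((i : ℤ) - (j : ℤ) : ℤ) ≠ 0 := by
        rw [sub_ne_zero]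
        exact_mod_cast Fin.val_ne_of_ne hij
      simp only [hφdef]
      rw [h1, sinc_of_ne_zero (mul_ne_zero (Int.cast_ne_zero.2 h2) Real.pi_ne_zero),
        Real.sin_int_mul_pi]
      simp) hfin.toFinset hcardm
  have hout : ∀ t, t ∉ Set.Ico x (x + ℓ) → |∑ i, a i * φ (t - p i)| ≤ ε / 2 := by
    intro t ht
    have hdist : ∀ i, ρ ≤ |t - p i| := by
      intro i
      have hi : (i : ℝ) / s ≤ m / s := by
        gcongr
        exact i.2.le
      have hi0 : 0 ≤ (i : ℝ) / s := by positivity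
      rw [Set.mem_Ico, not_and_or, not_le, not_lt] at ht
      rcases ht with ht | ht
      · refine le_trans ?_ (neg_le_abs _)
        simp only [p]
        linarith
      · refine le_trans ?_ (le_abs_self _)
        simp only [p, ℓ] at ht ⊢
        linarith
    have hterm : ∀ i, |a i * φ (t - p i)| ≤ ε / 2 / m := by
      intro i
      rw [abs_mul]
      refine (mul_le_of_le_one_left (abs_nonneg _) (ha1 i)).trans ?_
      rw [le_div_iff₀ hm0']
      have h1 := hφd (t - p i)
      have h2 : ρ ^ 2 ≤ (t - p i) ^ 2 := by
        rw [← sq_abs (t - p i)]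
        exact pow_le_pow_left₀ hρ.le (hdist i) 2
      have h3 : |φ (t - p i)| * (π ^ 2 * s * δ * ρ ^ 2) ≤ 1 := le_trans (by gcongr) h1
      have h4 : |φ (t - p i)| * m * (π ^ 2 * s * δ * θ ^ 2 * m) ≤
          ε / 2 * (π ^ 2 * s * δ * θ ^ 2 * m) := by
        refine le_trans (le_trans (le_of_eq ?_) h3) hm
        simp only [ρ]
        ring
      exact le_of_mul_le_mul_right h4 (by positivity)
    calc |∑ i, a i * φ (t - p i)| ≤ ∑ i, |a i * φ (t - p i)| := Finset.abs_sum_le_sum_abs _ _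
      _ ≤ ∑ _i : Fin m, ε / 2 / m := Finset.sum_le_sum fun i _ => hterm i
      _ = ε / 2 := by
          rw [Finset.sum_const, Finset.card_univ, Fintype.card_fin, nsmul_eq_mul]
          field_simp
  refine ⟨m, a, p, hg1, hg2, fun q hq t y hty hy => ?_⟩
  by_cases ht : t ∈ Set.Ico x (x + ℓ)
  · have hq0 : 0 < q := hQpos hq
    have ht0 : 0 < t := by linarith [ht.1]
    have htq : t ≤ q := by
      refine le_of_sq_le_sq ?_ hq0.le
      nlinarith [sq_nonneg y]
    have hyY : y ^ 2 ≤ Y ^ 2 := by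
      rw [← sq_abs y]
      exact pow_le_pow_left₀ (abs_nonneg _) hy 2
    have hqt : q - t < r := by
      have h1 : (q - t) * (q + t) = y ^ 2 := by linarith
      by_contra! h
      have h2 : r * x ≤ (q - t) * (q + t) :=
        mul_le_mul h (by linarith [ht.1]) (by linarith) (by linarith)
      linarith
    have hgq : |∑ i, a i * φ (q - p i)| ≤ ε / 2 := by
      by_cases hqI : q ∈ Set.Ico x (x + ℓ)
      · rw [hgS q (by simpa using ⟨hq, hqI⟩), abs_zero]
        positivity
      · exact hout q hqI
    have hdiff : |∑ i, a i * φ (t - p i) - ∑ i, a i * φ (q - p i)| ≤ ε / 2 := by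
      rw [← Finset.sum_sub_distrib]
      calc |∑ i, (a i * φ (t - p i) - a i * φ (q - p i))|
          ≤ ∑ i, |a i * φ (t - p i) - a i * φ (q - p i)| := Finset.abs_sum_le_sum_abs _ _
        _ ≤ ∑ _i : Fin m, ε / (2 * m) := by
            refine Finset.sum_le_sum fun i _ => ?_
            rw [← mul_sub, abs_mul]
            refine (mul_le_of_le_one_left (abs_nonneg _) (ha1 i)).trans ?_
            refine (hφr ?_).le
            rw [Real.dist_eq, abs_sub_comm, abs_of_nonneg (by linarith)]
            linarith
        _ = ε / 2 := by
            rw [Finset.sum_const, Finset.card_univ, Fintype.card_fin, nsmul_eq_mul]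
            field_simp
    have := abs_sub_abs_le_abs_sub (∑ i, a i * φ (t - p i)) (∑ i, a i * φ (q - p i))
    change |∑ i, a i * φ (t - p i)| ≤ ε
    linarith
  · exact (hout t ht).trans (by linarith)

lemma MemBernstein.sum {Ω : Set V} {ι : Type*} (s : Finset ι) {f : ι → V → ℂ}
    (h : ∀ i ∈ s, MemBernstein Ω (f i)) : MemBernstein Ω (fun x => ∑ i ∈ s, f i x) := by
  classical
  induction s using Finset.induction_on with
  | empty => exact ⟨by simpa using continuous_const, ⟨0, by simp⟩, by simp⟩
  | insert i s hi ih =>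
    simp_rw [Finset.sum_insert hi]
    exact (h i (Finset.mem_insert_self _ _)).add
      (ih fun j hj => h j (Finset.mem_insert_of_mem hj))

lemma exists_dist_eq_diam {X : Type*} [PseudoMetricSpace X] {Ω : Set X} (hΩ : IsCompact Ω)
    (hne : Ω.Nonempty) : ∃ a ∈ Ω, ∃ b ∈ Ω, dist a b = Metric.diam Ω := by
  obtain ⟨⟨a, b⟩, ⟨ha, hb⟩, hmax⟩ := (hΩ.prod hΩ).exists_isMaxOn (hne.prod hne)
    (f := fun z : X × X => dist z.1 z.2) (by fun_prop)
  refine ⟨a, ha, b, hb, le_antisymm (Metric.dist_le_diam_of_mem hΩ.isBounded ha hb) ?_⟩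
  exact Metric.diam_le_of_forall_dist_le dist_nonneg fun x hx y hy => hmax (Set.mk_mem_prod hx hy)

/-- If `Q ∪ -Q` has density at most `diam Ω`, then there are functions with spectrum in an
arbitrarily small neighbourhood of `Ω` which are arbitrarily small on the circles. -/
theorem exists_small_on_circles {Ω : Set V} (hΩ : IsCompact Ω) (hconv : Convex ℝ Ω)
    (hd : 0 < Metric.diam Ω)
    (hV : ∀ u : V, ‖u‖ = 1 → ∃ v : V, ‖v‖ = 1 ∧ ⟪u, v⟫ = 0 ∧
      ∀ x : V, ⟪x, u⟫ ^ 2 + ⟪x, v⟫ ^ 2 = ‖x‖ ^ 2)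
    {Q : Set ℝ} (hQpos : Q ⊆ Set.Ioi 0) (hQ : UniformlyDiscrete Q)
    (hQd : lowerUniformDensity (Q ∪ -Q) ≤ Metric.diam Ω) {ε : ℝ} (hε : 0 < ε) :
    ∃ f : V → ℂ, MemBernstein (cthickening ε Ω) f ∧ (∀ x, ‖f x‖ ≤ 1) ∧ (∃ x, 1 / 2 ≤ ‖f x‖) ∧
      ∀ q ∈ Q, ∀ x ∈ sphere (0 : V) q, ‖f x‖ ≤ ε := by
  have hne : Ω.Nonempty := by
    by_contra h
    rw [Set.not_nonempty_iff_eq_empty] at h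
    simp [h] at hd
  obtain ⟨a, ha, b, hb, hab⟩ := exists_dist_eq_diam hΩ hne
  set σ := Metric.diam Ω
  obtain ⟨u, hu, hσu⟩ : ∃ u : V, ‖u‖ = 1 ∧ σ • u = b - a := by
    refine ⟨σ⁻¹ • (b - a), ?_, by rw [smul_smul, mul_inv_cancel₀ hd.ne', one_smul]⟩
    rw [norm_smul, norm_inv, Real.norm_eq_abs, abs_of_pos hd, ← dist_eq_norm, dist_comm, hab,
      inv_mul_cancel₀ hd.ne']
  obtain ⟨v, hv, huv, hpyth⟩ := hV u hu
  set c : V := (1 / 2 : ℝ) • (a + b)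
  set s := σ + ε
  set δ := ε / 2
  have hδ : 0 < δ := by positivity
  have hs : 0 < s := by positivity
  obtain ⟨m, α, p, hg1, ⟨t₀, ht₀⟩, hgsmall⟩ := exists_combination_small (s := s) (δ := δ) hQpos hQ
    hQd (half_pos hε) (by simp only [s]; linarith) hs hδ hε (1 / (π * δ * ε))
  set g : ℝ → ℝ := fun t =>
    ∑ i, α i * (sinc (π * (s * (t - p i))) * sinc (π * (δ * (t - p i))))
  have hbase : MemBernstein {ξ : V | ∃ θ : ℝ, |θ| ≤ (s + δ) / 2 ∧ ξ = θ • u}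
      (fun x => (sinc (π * ⟪x, s • u⟫) : ℝ) * ((sinc (π * ⟪x, δ • u⟫) : ℝ) * (1 : ℂ))) := by
    have h0 := memBernstein_one (V := V) (Ω := {0}) (by simp)
    have h1 := h0.sinc_mul (Ω' := {ξ : V | ∃ θ : ℝ, |θ| ≤ δ / 2 ∧ ξ = θ • u}) (δ • u) (by
      rintro _ rfl θ hθ
      refine ⟨θ * δ, ?_, by rw [zero_add, smul_smul]⟩
      rw [abs_mul, abs_of_pos hδ]
      nlinarith)
    refine h1.sinc_mul (s • u) ?_
    rintro _ ⟨θ, hθ, rfl⟩ θ' hθ'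
    refine ⟨θ + θ' * s, ?_, by rw [smul_smul θ' s, add_smul]⟩
    refine (abs_add_le _ _).trans ?_
    rw [abs_mul, abs_of_pos hs]
    nlinarith
  have hsum : MemBernstein {ξ : V | ∃ θ : ℝ, |θ| ≤ (s + δ) / 2 ∧ ξ = θ • u}
      (fun x => ((g ⟪x, u⟫ : ℝ) : ℂ)) := by
    have h := MemBernstein.sum Finset.univ (fun i _ =>
      (hbase.comp_add_right (-(p i • u))).const_mul (α i))
    convert h using 2 with x
    simp only [g, ofReal_sum]
    refine Finset.sum_congr rfl fun i _ => ?_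
    have h1 : ⟪x + -(p i • u), u⟫ = ⟪x, u⟫ - p i := by
      rw [inner_add_left, inner_neg_left, real_inner_smul_left, real_inner_self_eq_norm_sq, hu]
      ring
    simp only [real_inner_smul_right, h1]
    push_cast
    ring
  have hplane : MemBernstein (cthickening ε Ω) (fun x => cexp (↑(2 * π * ⟪x, c⟫) * I) *
      ((sinc (π * ⟪x, δ • v⟫) : ℝ) * ((g ⟪x, u⟫ : ℝ) : ℂ))) := by
    refine (hsum.sinc_mul (Ω' := {ξ : V | ∃ θ θ' : ℝ, |θ| ≤ (s + δ) / 2 ∧ |θ'| ≤ δ / 2 ∧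
      ξ = θ • u + θ' • v}) (δ • v) ?_).cexp_mul c ?_
    · rintro _ ⟨θ, hθ, rfl⟩ θ' hθ'
      refine ⟨θ, θ' * δ, hθ, ?_, by rw [smul_smul]⟩
      rw [abs_mul, abs_of_pos hδ]
      nlinarith
    · rintro _ ⟨θ, θ', hθ, hθ', rfl⟩
      have hsδ : 0 < s + δ := by positivity
      set κ := θ / (s + δ)
      have hκ : |κ| ≤ 1 / 2 := by
        rw [abs_div, abs_of_pos hsδ, div_le_iff₀ hsδ]
        linarith
      have hθκ : θ = κ * (s + δ) := by rw [div_mul_cancel₀ _ hsδ.ne']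
      have hmem : (κ * σ) • u + c ∈ Ω := by
        have hc2 : (κ * σ) • u + c = (1 / 2 - κ) • a + (1 / 2 + κ) • b := by
          rw [mul_smul, hσu]
          simp only [c]
          module
        rw [hc2]
        rw [abs_le] at hκ
        exact hconv ha hb (by linarith) (by linarith) (by ring)
      refine mem_cthickening_of_dist_le _ _ _ _ hmem ?_
      rw [dist_eq_norm]
      have h1 : θ • u + θ' • v + c - ((κ * σ) • u + c) = (κ * (ε + δ)) • u + θ' • v := by
        rw [hθκ]
        simp only [s]
        module
      rw [h1]
      refine (norm_add_le _ _).trans ?_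
      rw [norm_smul, norm_smul, hu, hv, mul_one, mul_one, Real.norm_eq_abs, Real.norm_eq_abs,
        abs_mul, abs_of_pos (by positivity : 0 < ε + δ)]
      have h2 : |κ| * (ε + δ) ≤ 1 / 2 * (ε + δ) := by gcongr
      simp only [δ] at h2 hθ' ⊢
      linarith
  have hnorm : ∀ x, ‖cexp (↑(2 * π * ⟪x, c⟫) * I) *
      ((sinc (π * ⟪x, δ • v⟫) : ℝ) * ((g ⟪x, u⟫ : ℝ) : ℂ))‖ =
      |sinc (π * (δ * ⟪x, v⟫))| * |g ⟪x, u⟫| := by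
    intro x
    rw [norm_mul, norm_exp_ofReal_mul_I, one_mul, norm_mul, norm_real, norm_real,
      Real.norm_eq_abs, Real.norm_eq_abs, real_inner_smul_right]
  refine ⟨_, hplane, fun x => ?_, ⟨t₀ • u, ?_⟩, fun q hq x hx => ?_⟩
  · rw [hnorm]
    exact mul_le_one₀ (abs_sinc_le_one _) (abs_nonneg _) (hg1 _)
  · rw [hnorm, real_inner_smul_left, real_inner_smul_left, huv, real_inner_self_eq_norm_sq, hu]
    simpa using ht₀
  · rw [hnorm]
    rw [mem_sphere_zero_iff_norm] at hx
    rcases le_or_gt |⟪x, v⟫| (1 / (π * δ * ε)) with hy | hy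
    · refine (mul_le_of_le_one_left (abs_nonneg _) (abs_sinc_le_one _)).trans ?_
      exact hgsmall q hq _ _ (by rw [hpyth, hx]) hy
    · refine (mul_le_of_le_one_right (abs_nonneg _) (hg1 _)).trans ?_
      rw [div_lt_iff₀ (by positivity)] at hy
      have h1 := abs_sinc_mul_abs_le_one (π * (δ * ⟪x, v⟫))
      rw [abs_mul π, abs_mul δ, abs_of_pos Real.pi_pos, abs_of_pos hδ] at h1
      have hv0 : 0 < |⟪x, v⟫| := by
        by_contra! h
        have : |⟪x, v⟫| * (π * δ * ε) ≤ 0 := mul_nonpos_of_nonpos_of_nonneg h (by positivity)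
        linarith
      have h2 : |sinc (π * (δ * ⟪x, v⟫))| * (π * (δ * |⟪x, v⟫|)) ≤
          ε * (π * (δ * |⟪x, v⟫|)) := by
        refine h1.trans (hy.le.trans (le_of_eq ?_))
        ring
      exact le_of_mul_le_mul_right h2 (by positivity)

/-- Bernstein functions are locally uniformly approximated by Bernstein functions with the same
spectrum vanishing at infinity. -/
lemma MemBernstein.exists_approx_zeroAtInfty {Ω : Set V} (hconv : Convex ℝ Ω) {p u v : V} {c : ℝ}
    (hc : 0 < c) (hpc : closedBall p c ⊆ Ω) (hu : ‖u‖ = 1) (hv : ‖v‖ = 1)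
    (hpyth : ∀ x : V, ⟪x, u⟫ ^ 2 + ⟪x, v⟫ ^ 2 = ‖x‖ ^ 2) {f : V → ℂ} (hf : MemBernstein Ω f)
    (hf1 : ∀ x, ‖f x‖ ≤ 1) (R : ℝ) {ε : ℝ} (hε : 0 < ε) :
    ∃ h : V → ℂ, MemBernstein Ω h ∧ Tendsto h (cocompact V) (𝓝 0) ∧ (∀ x, ‖h x‖ ≤ 1) ∧
      h 0 = f 0 ∧ ∀ x, ‖x‖ ≤ R → ‖h x - f x‖ < ε := by
  set Φ : ℝ → V → ℂ := fun ρ x => cexp (↑(2 * π * ⟪x, (1 - ρ) • p⟫) * I) *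
    ((sinc (π * ⟪x, ((1 - ρ) * c) • v⟫) : ℝ) *
      ((sinc (π * ⟪x, ((1 - ρ) * c) • u⟫) : ℝ) * f (ρ • x))) with hΦ
  have hcont : Continuous fun z : ℝ × V => Φ z.1 z.2 := by
    refine Continuous.mul (by fun_prop) (Continuous.mul ?_ (Continuous.mul ?_ ?_))
    · exact continuous_ofReal.comp (continuous_sinc.comp (by fun_prop))
    · exact continuous_ofReal.comp (continuous_sinc.comp (by fun_prop))
    · exact hf.1.comp (by fun_prop)
  have hΦ1 : ∀ x, Φ 1 x = f x := fun x => by simp [hΦ]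
  have hev : ∀ᶠ ρ in 𝓝 (1 : ℝ), ∀ x ∈ closedBall (0 : V) R, ‖Φ ρ x - f x‖ < ε := by
    refine (isCompact_closedBall 0 R).eventually_forall_of_forall_eventually fun x _ => ?_
    have h1 : Continuous fun z : ℝ × V => ‖Φ z.1 z.2 - f z.2‖ :=
      (hcont.sub (hf.1.comp continuous_snd)).norm
    refine h1.continuousAt.eventually_lt continuousAt_const ?_
    simpa [hΦ1] using hε
  obtain ⟨ρ, hρε, hρ0, hρ1⟩ : ∃ ρ : ℝ, (∀ x ∈ closedBall (0 : V) R, ‖Φ ρ x - f x‖ < ε) ∧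
      0 < ρ ∧ ρ < 1 := by
    obtain ⟨ρ, h1, h2⟩ := ((hev.filter_mono nhdsWithin_le_nhds).and
      (Ioo_mem_nhdsLT (zero_lt_one (α := ℝ)))).exists
    exact ⟨ρ, h1, h2.1, h2.2⟩
  have hnorm : ∀ x, ‖Φ ρ x‖ = |sinc (π * ⟪x, ((1 - ρ) * c) • v⟫)| *
      (|sinc (π * ⟪x, ((1 - ρ) * c) • u⟫)| * ‖f (ρ • x)‖) := by
    intro x
    rw [hΦ, norm_mul, norm_exp_ofReal_mul_I, one_mul, norm_mul, norm_mul, norm_real, norm_real,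
      Real.norm_eq_abs, Real.norm_eq_abs]
  have hd : 0 < (1 - ρ) * c := mul_pos (by linarith) hc
  refine ⟨Φ ρ, ?_, ?_, fun x => ?_, by simp [hΦ], fun x hx => hρε x (by simpa using hx)⟩
  · set Ω₁ : Set V := {ξ | ∃ ζ ∈ Ω, ξ = ρ • ζ}
    set Ω₂ : Set V := {ξ | ∃ ζ ∈ Ω, ∃ θ : ℝ, |θ| ≤ 1 / 2 ∧ ξ = ρ • ζ + θ • ((1 - ρ) * c) • u}
    set Ω₃ : Set V := {ξ | ∃ ζ ∈ Ω, ∃ θ θ' : ℝ, |θ| ≤ 1 / 2 ∧ |θ'| ≤ 1 / 2 ∧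
      ξ = ρ • ζ + θ • ((1 - ρ) * c) • u + θ' • ((1 - ρ) * c) • v}
    have h1 : MemBernstein Ω₁ (fun x => f (ρ • x)) := hf.comp_smul hρ0 fun ξ hξ => ⟨ξ, hξ, rfl⟩
    have h2 := h1.sinc_mul (Ω' := Ω₂) (((1 - ρ) * c) • u) (by
      rintro _ ⟨ζ, hζ, rfl⟩ θ hθ
      exact ⟨ζ, hζ, θ, hθ, rfl⟩)
    have h3 := h2.sinc_mul (Ω' := Ω₃) (((1 - ρ) * c) • v) (by
      rintro _ ⟨ζ, hζ, θ, hθ, rfl⟩ θ' hθ'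
      exact ⟨ζ, hζ, θ, θ', hθ, hθ', rfl⟩)
    refine h3.cexp_mul ((1 - ρ) • p) ?_
    rintro _ ⟨ζ, hζ, θ, θ', hθ, hθ', rfl⟩
    have hmem : p + ((θ * c) • u + (θ' * c) • v) ∈ Ω := by
      refine hpc ?_
      rw [mem_closedBall, dist_eq_norm, add_sub_cancel_left]
      refine (norm_add_le _ _).trans ?_
      rw [norm_smul, norm_smul, hu, hv, mul_one, mul_one, Real.norm_eq_abs, Real.norm_eq_abs,
        abs_mul, abs_mul, abs_of_pos hc]
      nlinarith
    have : ρ • ζ + θ • ((1 - ρ) * c) • u + θ' • ((1 - ρ) * c) • v + (1 - ρ) • p =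
        ρ • ζ + (1 - ρ) • (p + ((θ * c) • u + (θ' * c) • v)) := by module
    rw [this]
    exact hconv hζ hmem hρ0.le (by linarith) (by ring)
  · set d := (1 - ρ) * c
    refine squeeze_zero_norm' (a := fun x => 2 / (π * d) * ‖x‖⁻¹) ?_ ?_
    · filter_upwards [(tendsto_norm_cocompact_atTop (E := V)).eventually_gt_atTop 0] with x hx
      rw [hnorm, ← div_eq_mul_inv, le_div_iff₀ hx, le_div_iff₀ (by positivity)]
      set A := |sinc (π * ⟪x, d • v⟫)|
      set B := |sinc (π * ⟪x, d • u⟫)|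
      have hA := abs_sinc_mul_abs_le_one (π * ⟪x, d • v⟫)
      have hB := abs_sinc_mul_abs_le_one (π * ⟪x, d • u⟫)
      rw [real_inner_smul_right, abs_mul, abs_mul, abs_of_pos Real.pi_pos, abs_of_pos hd,
        ← real_inner_smul_right] at hA hB
      have hA1 : A ≤ 1 := abs_sinc_le_one _
      have hB1 : B ≤ 1 := abs_sinc_le_one _
      have hA0 : 0 ≤ A := abs_nonneg _
      have hB0 : 0 ≤ B := abs_nonneg _
      have hx' : ‖x‖ ≤ |⟪x, u⟫| + |⟪x, v⟫| := by
        refine le_of_sq_le_sq ?_ (by positivity)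
        rw [← hpyth x, ← sq_abs ⟪x, u⟫, ← sq_abs ⟪x, v⟫]
        nlinarith [abs_nonneg ⟪x, u⟫, abs_nonneg ⟪x, v⟫]
      calc A * (B * ‖f (ρ • x)‖) * ‖x‖ * (π * d)
          ≤ A * (B * 1) * (|⟪x, u⟫| + |⟪x, v⟫|) * (π * d) := by
            gcongr
            exact hf1 _
        _ = A * (B * (π * (d * |⟪x, u⟫|))) + B * (A * (π * (d * |⟪x, v⟫|))) := by ring
        _ ≤ 1 * 1 + 1 * 1 := by gcongr
        _ = 2 := by norm_num
    · simpa using (tendsto_norm_cocompact_atTop (E := V)).inv_tendsto_atTop.const_mul (2 / (π * d))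
  · rw [hnorm]
    exact mul_le_one₀ (abs_sinc_le_one _) (by positivity)
      (mul_le_one₀ (abs_sinc_le_one _) (norm_nonneg _) (hf1 _))

/-- A bounded functional is tight on the functions vanishing at infinity. -/
lemma exists_radius_forall_le {E : Type*} [SeminormedAddCommGroup E]
    (L : (E →ᵇ ℂ) →ₗ[ℝ] ℝ) {C : ℝ} (hL : ∀ h, L h ≤ C * ‖h‖) {η : ℝ} (hη : 0 < η) :
    ∃ R, ∀ h : E →ᵇ ℂ, Tendsto h (cocompact E) (𝓝 0) → (∀ x, ‖x‖ ≤ R → h x = 0) → ‖h‖ ≤ 1 →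
      L h ≤ η := by
  set S : Set ℝ := {y | ∃ h : E →ᵇ ℂ, Tendsto h (cocompact E) (𝓝 0) ∧ ‖h‖ ≤ 1 ∧ y = L h}
  have hS0 : (0 : ℝ) ∈ S := ⟨0, (tendsto_const_nhds : Tendsto (fun _ : E => (0 : ℂ)) _ _), by simp, by simp⟩
  have hSb : BddAbove S := by
    refine ⟨|C|, ?_⟩
    rintro _ ⟨h, -, h1, rfl⟩
    refine (hL h).trans ?_
    calc C * ‖h‖ ≤ |C| * ‖h‖ := by
          gcongr
          exact le_abs_self _
      _ ≤ |C| := mul_le_of_le_one_right (abs_nonneg _) h1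
  set s := sSup S
  have hs0 : 0 ≤ s := le_csSup hSb hS0
  set ζ := η / (s + 1)
  have hζ : 0 < ζ := by positivity
  obtain ⟨_, ⟨h₀, h₀z, h₀1, rfl⟩, hlt⟩ := exists_lt_of_lt_csSup ⟨0, hS0⟩ (sub_lt_self s hζ)
  obtain ⟨R, hR⟩ : ∃ R, ∀ x, R < ‖x‖ → ‖h₀ x‖ < ζ := by
    have h1 : ∀ᶠ x in cocompact E, ‖h₀ x‖ < ζ := by
      simpa using h₀z.norm.eventually_lt_const (by simpa using hζ)
    obtain ⟨K, hK, hKs⟩ := mem_cocompact.1 h1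
    obtain ⟨R, hR⟩ := hK.isBounded.subset_closedBall 0
    refine ⟨R, fun x hx => hKs fun hxK => ?_⟩
    have := hR hxK
    rw [mem_closedBall_zero_iff] at this
    linarith
  refine ⟨R, fun h hz h0 h1 => ?_⟩
  have hn : ‖h₀ + h‖ ≤ 1 + ζ := by
    refine (BoundedContinuousFunction.norm_le (by positivity)).2 fun x => ?_
    rw [BoundedContinuousFunction.add_apply]
    rcases le_or_gt ‖x‖ R with hx | hx
    · rw [h0 x hx, add_zero]
      exact (h₀.norm_coe_le_norm x).trans (by linarith)
    · refine (norm_add_le _ _).trans ?_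
      have := hR x hx
      have := h.norm_coe_le_norm x
      linarith
  have hmem : L ((1 + ζ)⁻¹ • (h₀ + h)) ∈ S := by
    refine ⟨_, ?_, ?_, rfl⟩
    · have := (h₀z.add hz).const_smul ((1 + ζ)⁻¹)
      rw [add_zero, smul_zero] at this
      exact this
    · rw [norm_smul, norm_inv, Real.norm_eq_abs, abs_of_pos (by positivity), inv_mul_eq_div,
        div_le_one (by positivity)]
      exact hn
  have h2 := le_csSup hSb hmem
  rw [map_smul, map_add, smul_eq_mul, inv_mul_eq_div, div_le_iff₀ (by positivity)] at h2
  have h3 : ζ * (s + 1) = η := div_mul_cancel₀ _ (by positivity)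
  change _ ≤ s * (1 + ζ) at h2
  linarith

/-- By Hahn–Banach, evaluation at the origin on a Bernstein space extends to a functional
controlled by the values on a sampling set. -/
lemma exists_functional_of_sampling {Ω P : Set V} {C : ℝ} (hC : 0 < C)
    (hP : ∀ f : V → ℂ, MemBernstein Ω f → ∀ x, ‖f x‖ ≤ C * sSup ((fun p => ‖f p‖) '' P)) :
    ∃ L : (V →ᵇ ℂ) →ₗ[ℝ] ℝ, (∀ h : V →ᵇ ℂ, MemBernstein Ω h → L h = (h 0).re) ∧
      ∀ (h : V →ᵇ ℂ) (b : ℝ), 0 ≤ b → (∀ x ∈ P, ‖h x‖ ≤ b) → L h ≤ C * b := by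
  let W : Submodule ℝ (V →ᵇ ℂ) :=
    { carrier := {h | MemBernstein Ω h}
      add_mem' := fun {a b} ha hb => MemBernstein.add ha hb
      zero_mem' := by
        refine ⟨(continuous_const : Continuous fun _ : V => (0 : ℂ)), ⟨0, by simp⟩, by simp⟩
      smul_mem' := fun c h hh => by
        have := MemBernstein.const_mul hh (c : ℂ)
        refine (?_ : MemBernstein Ω (c • h : V →ᵇ ℂ))
        convert this using 2 with x
        rw [BoundedContinuousFunction.smul_apply, real_smul] }
  let e : W →ₗ[ℝ] ℝ :=
    { toFun := fun h => ((h : V →ᵇ ℂ) 0).re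
      map_add' := fun a b => by simp
      map_smul' := fun c a => by simp }
  have hbdd : ∀ h : V →ᵇ ℂ, BddAbove ((fun p => ‖h p‖) '' P) := fun h =>
    ⟨‖h‖, by rintro _ ⟨x, -, rfl⟩; exact h.norm_coe_le_norm x⟩
  have hnn : ∀ h : V →ᵇ ℂ, 0 ≤ sSup ((fun p => ‖h p‖) '' P) := fun h =>
    Real.sSup_nonneg (by rintro _ ⟨x, -, rfl⟩; exact norm_nonneg _)
  obtain ⟨L, hL1, hL2⟩ : ∃ L : (V →ᵇ ℂ) →ₗ[ℝ] ℝ, (∀ h : W, L h = e h) ∧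
      ∀ h, L h ≤ C * sSup ((fun p => ‖h p‖) '' P) := by
    refine exists_extension_of_le_sublinear ⟨W, e⟩
      (fun h : V →ᵇ ℂ => C * sSup ((fun p => ‖h p‖) '' P)) ?_ ?_ ?_
    · intro c hc h
      have : (fun p => ‖(c • h) p‖) '' P = c • ((fun p => ‖h p‖) '' P) := by
        rw [← Set.image_smul, Set.image_image]
        refine Set.image_congr fun x _ => ?_
        rw [BoundedContinuousFunction.smul_apply, norm_smul, Real.norm_eq_abs, abs_of_pos hc,
          smul_eq_mul]
      rw [this, Real.sSup_smul_of_nonneg hc.le, smul_eq_mul]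
      ring
    · intro h k
      rw [← mul_add]
      refine mul_le_mul_of_nonneg_left (Real.sSup_le ?_ (add_nonneg (hnn h) (hnn k))) hC.le
      rintro _ ⟨x, hx, rfl⟩
      exact (norm_add_le _ _).trans (add_le_add (le_csSup (hbdd h) ⟨x, hx, rfl⟩)
        (le_csSup (hbdd k) ⟨x, hx, rfl⟩))
    · intro h
      exact (re_le_norm _).trans (hP _ h.2 0)
  refine ⟨L, fun h hh => hL1 ⟨h, hh⟩, fun h b hb hbP => (hL2 h).trans ?_⟩
  refine mul_le_mul_of_nonneg_left (Real.sSup_le ?_ hb) hC.le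
  rintro _ ⟨x, hx, rfl⟩
  exact hbP x hx

/-- Ultralimits of uniformly bounded functionals. -/
lemma exists_ultralimit_functional {E : Type*} [SeminormedAddCommGroup E] [NormedSpace ℝ E]
    (U : Ultrafilter ℕ) (L : ℕ → E →ₗ[ℝ] ℝ) {C : ℝ} (hL : ∀ n h, L n h ≤ C * ‖h‖) :
    ∃ L' : E →ₗ[ℝ] ℝ, ∀ h, Tendsto (fun n => L n h) U (𝓝 (L' h)) := by
  have hlim : ∀ h, ∃ l, Tendsto (fun n => L n h) U (𝓝 l) := by
    intro h
    have hmem : ∀ n, L n h ∈ Set.Icc (-(C * ‖h‖)) (C * ‖h‖) := by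
      intro n
      have := hL n (-h)
      rw [map_neg, norm_neg] at this
      exact ⟨by linarith, hL n h⟩
    obtain ⟨l, -, hl⟩ := isCompact_Icc.ultrafilter_le_nhds' (U.map fun n => L n h)
      (Ultrafilter.mem_map.2 (univ_mem' hmem))
    exact ⟨l, hl⟩
  choose l hl using hlim
  exact ⟨{ toFun := l
           map_add' := fun a b => tendsto_nhds_unique (hl (a + b)) (by
             simpa using (hl a).add (hl b))
           map_smul' := fun c a => tendsto_nhds_unique (hl (c • a)) (by
             simpa using (hl a).const_mul c) }, hl⟩

/-- Normalised functions with spectra in shrinking neighbourhoods of a compact set `Ω` have,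
along any ultrafilter, a locally uniform limit in the Bernstein space of `Ω`. -/
lemma exists_tendstoUniformlyOn_memBernstein {Ω : Set V} (hΩ : IsCompact Ω) {U : Ultrafilter ℕ}
    (hU : (U : Filter ℕ) ≤ atTop) {g : ℕ → V → ℂ}
    (hg : ∀ n : ℕ, MemBernstein (cthickening (1 / ((n : ℝ) + 1)) Ω) (g n)) (hg1 : ∀ n x, ‖g n x‖ ≤ 1) :
    ∃ f : V → ℂ, MemBernstein Ω f ∧ (∀ x, ‖f x‖ ≤ 1) ∧
      ∀ K, IsCompact K → TendstoUniformlyOn g f U K := by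
  have hlim : ∀ x, ∃ l ∈ closedBall (0 : ℂ) 1, Tendsto (fun n => g n x) U (𝓝 l) := fun x =>
    (isCompact_closedBall (0 : ℂ) 1).ultrafilter_le_nhds' (U.map fun n => g n x)
      (Ultrafilter.mem_map.2 (univ_mem' fun n => by simpa using hg1 n x))
  choose f hf1 hf using hlim
  replace hf1 : ∀ x, ‖f x‖ ≤ 1 := fun x => by simpa using hf1 x
  have hequi : UniformEquicontinuous g := by
    rw [Metric.uniformEquicontinuous_iff]
    intro ε hε
    obtain ⟨r, hr, H⟩ := exists_modulus_of_memBernstein (hΩ.cthickening (r := 1)) hε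
    refine ⟨r, hr, fun x y hxy n => H (g n) ((hg n).mono (cthickening_mono ?_ _)) (hg1 n) x y hxy⟩
    rw [div_le_one (by positivity)]
    linarith [n.cast_nonneg (α := ℝ)]
  have hpi : Tendsto g U (𝓝 f) := tendsto_pi_nhds.2 hf
  have hunif : ∀ K, IsCompact K → TendstoUniformlyOn g f U K := by
    have h1 := (EquicontinuousOn.tendsto_uniformOnFun_iff_pi (𝔖 := {K : Set V | IsCompact K})
      (fun K hK => hK) (Set.eq_univ_of_forall fun x => ⟨{x}, isCompact_singleton, rfl⟩)
      (fun K _ => hequi.equicontinuous.equicontinuousOn K) U f).2 hpi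
    exact UniformOnFun.tendsto_iff_tendstoUniformlyOn.1 h1
  have hfc : Continuous f := hpi.continuous_of_equicontinuous hequi.equicontinuous
  refine ⟨f, ⟨hfc, ⟨1, hf1⟩, fun ψ hψ hψc hψΩ => ?_⟩, hf1, hunif⟩
  have hsub : ∀ k : ℕ, ∃ n, k ≤ n ∧ ∀ x ∈ closedBall (0 : V) k,
      dist (f x) (g n x) < 1 / ((k : ℝ) + 1) := fun k =>
    (((eventually_ge_atTop k).filter_mono hU).and (Metric.tendstoUniformlyOn_iff.1
      (hunif _ (isCompact_closedBall (0 : V) k)) _ (by positivity))).exists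
  choose ν hν hνd using hsub
  have hνt : Tendsto ν atTop atTop := tendsto_atTop_mono hν tendsto_id
  have hpt : ∀ x, Tendsto (fun k => g (ν k) x) atTop (𝓝 (f x)) := by
    intro x
    rw [tendsto_iff_dist_tendsto_zero]
    refine squeeze_zero' (Eventually.of_forall fun _ => dist_nonneg) ?_
      tendsto_one_div_add_atTop_nhds_zero_nat
    filter_upwards [tendsto_natCast_atTop_atTop.eventually_ge_atTop ‖x‖] with k hk
    rw [dist_comm]
    exact (hνd k x (by simpa using hk)).le
  have hdct : Tendsto (fun k => ∫ x, g (ν k) x * 𝓕 ψ x) atTop (𝓝 (∫ x, f x * 𝓕 ψ x)) := by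
    refine tendsto_integral_of_dominated_convergence (fun x => ‖𝓕 ψ x‖) (fun k => ?_)
      (integrable_fourier_of_hasCompactSupport hψ hψc).norm (fun k => ?_) ?_
    · exact (integrable_mul_fourier (hg _).1 (hg _).2.1 hψ hψc).aestronglyMeasurable
    · refine Eventually.of_forall fun x => ?_
      rw [norm_mul]
      exact mul_le_of_le_one_left (norm_nonneg _) (hg1 _ _)
    · exact Eventually.of_forall fun x => (hpt x).mul_const _
  have hzero : ∀ᶠ k in atTop, ∫ x, g (ν k) x * 𝓕 ψ x = 0 := by
    obtain ⟨δ, hδ, hdisj⟩ := (Set.disjoint_iff_inter_eq_empty.2 hψΩ).symm.exists_cthickenings hΩ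
      (isClosed_tsupport ψ)
    have h1 : ∀ᶠ n : ℕ in atTop, 1 / ((n : ℝ) + 1) < δ :=
      tendsto_one_div_add_atTop_nhds_zero_nat.eventually_lt_const hδ
    filter_upwards [hνt.eventually h1] with k hk
    refine (hg (ν k)).2.2 ψ hψ hψc (Set.disjoint_iff_inter_eq_empty.1 ?_)
    exact hdisj.symm.mono (self_subset_cthickening _) (cthickening_mono hk.le _)
  exact tendsto_nhds_unique hdct ((tendsto_congr' hzero).2 tendsto_const_nhds)

/-- The union of circles cannot be a sampling set if it carries arbitrarily small normalised
functions whose spectra lie in arbitrarily small neighbourhoods of `Ω`. -/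
theorem not_isSamplingSet_of_small {Ω P : Set V} (hΩ : IsCompact Ω) (hconv : Convex ℝ Ω)
    {p u v : V} {c : ℝ} (hc : 0 < c) (hpc : closedBall p c ⊆ Ω) (hu : ‖u‖ = 1) (hv : ‖v‖ = 1)
    (hpyth : ∀ x : V, ⟪x, u⟫ ^ 2 + ⟪x, v⟫ ^ 2 = ‖x‖ ^ 2)
    (H : ∀ ε > 0, ∃ f : V → ℂ, MemBernstein (cthickening ε Ω) f ∧ (∀ x, ‖f x‖ ≤ 1) ∧
      (∃ x, 1 / 2 ≤ ‖f x‖) ∧ ∀ x ∈ P, ‖f x‖ ≤ ε) : ¬ IsSamplingSet Ω P := by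
  rintro ⟨C, hC, hP⟩
  have hpos : ∀ n : ℕ, 0 < 1 / ((n : ℝ) + 1) := fun n => by positivity
  choose F hF hF1 hF2 hFP using fun n => H _ (hpos n)
  choose y hy using hF2
  have hunim : ∀ n, ∃ a : ℂ, ‖a‖ = 1 ∧ a * F n (y n) = ‖F n (y n)‖ := by
    intro n
    have h0 : (‖F n (y n)‖ : ℂ) ≠ 0 := by
      have := hy n
      exact_mod_cast (show (0 : ℝ) < ‖F n (y n)‖ by linarith).ne'
    refine ⟨(starRingEnd ℂ) (F n (y n)) / ‖F n (y n)‖, ?_, ?_⟩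
    · rw [norm_div, RCLike.norm_conj, norm_real, norm_norm, div_self (by exact_mod_cast h0)]
    · rw [div_mul_eq_mul_div, conj_mul', sq, mul_div_assoc, div_self h0, mul_one]
  choose a ha1 ha using hunim
  set g : ℕ → V → ℂ := fun n x => a n * F n (x + y n) with hg_def
  have hg : ∀ n : ℕ, MemBernstein (cthickening (1 / ((n : ℝ) + 1)) Ω) (g n) := fun n =>
    ((hF n).comp_add_right (y n)).const_mul (a n)
  have hgn : ∀ n x, ‖g n x‖ = ‖F n (x + y n)‖ := fun n x => by
    rw [hg_def, norm_mul, ha1, one_mul]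
  have hg1 : ∀ n x, ‖g n x‖ ≤ 1 := fun n x => (hgn n x).trans_le (hF1 _ _)
  have hPn : ∀ n, ∀ f : V → ℂ, MemBernstein Ω f → ∀ x,
      ‖f x‖ ≤ C * sSup ((fun p => ‖f p‖) '' {x | x + y n ∈ P}) := by
    intro n f hf x
    have h1 := hP _ (hf.comp_add_right (-y n)) (x + y n)
    have h2 : (fun p => ‖f (p + -y n)‖) '' P = (fun p => ‖f p‖) '' {x | x + y n ∈ P} := by
      ext t
      constructor
      · rintro ⟨z, hz, rfl⟩
        exact ⟨z + -y n, by simpa using hz, rfl⟩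
      · rintro ⟨z, hz, rfl⟩
        exact ⟨z + y n, hz, by simp⟩
    rw [h2] at h1
    simpa using h1
  choose L hL0 hLP using fun n => exists_functional_of_sampling hC (hPn n)
  set U : Ultrafilter ℕ := hyperfilter ℕ
  have hU : (U : Filter ℕ) ≤ atTop := Nat.hyperfilter_le_atTop
  obtain ⟨f, hf, hf1, hfU⟩ := exists_tendstoUniformlyOn_memBernstein hΩ hU hg hg1
  obtain ⟨L', hL'⟩ := exists_ultralimit_functional U L
    (fun n h => hLP n h ‖h‖ (norm_nonneg _) fun x _ => h.norm_coe_le_norm x)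
  have hL'C : ∀ h, L' h ≤ C * ‖h‖ := fun h => le_of_tendsto (hL' h) (Eventually.of_forall fun n =>
    hLP n h ‖h‖ (norm_nonneg _) fun x _ => h.norm_coe_le_norm x)
  have hf0 : 1 / 2 ≤ (f 0).re := by
    have h1 : Tendsto (fun n => g n 0) U (𝓝 (f 0)) :=
      (hfU {0} isCompact_singleton).tendsto_at (Set.mem_singleton 0)
    refine ge_of_tendsto ((continuous_re.tendsto _).comp h1) (Eventually.of_forall fun n => ?_)
    have h2 : g n 0 = ‖F n (y n)‖ := by simp only [hg_def, ← ha n, zero_add]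
    rw [Function.comp_apply, h2, ofReal_re]
    exact hy n
  set η : ℝ := 1 / (4 * (1 + 2 * C))
  have hη : 0 < η := by positivity
  obtain ⟨R, hR⟩ := exists_radius_forall_le L' hL'C hη
  obtain ⟨h, hh, hhz, hh1, hh0, hhf⟩ :=
    hf.exists_approx_zeroAtInfty hconv hc hpc hu hv hpyth hf1 (R + 1) hη
  set χ : V → ℝ := fun x => max 0 (min 1 (R + 1 - ‖x‖)) with hχ
  have hχc : Continuous χ := by fun_prop
  have hχ0 : ∀ x, 0 ≤ χ x := fun x => le_max_left _ _
  have hχ1 : ∀ x, χ x ≤ 1 := fun x => max_le zero_le_one (min_le_left _ _)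
  have hχR : ∀ x, ‖x‖ ≤ R → χ x = 1 := fun x hx => by
    rw [hχ]
    simp only
    rw [min_eq_left (by linarith), max_eq_right zero_le_one]
  have hχR' : ∀ x, R + 1 ≤ ‖x‖ → χ x = 0 := fun x hx =>
    max_eq_left ((min_le_right _ _).trans (by linarith))
  have hχn : ∀ x (z : ℂ), ‖(χ x : ℂ) * z‖ = χ x * ‖z‖ := fun x z => by
    rw [norm_mul, norm_real, Real.norm_eq_abs, abs_of_nonneg (hχ0 x)]
  have hχle : ∀ x (z : ℂ), ‖(χ x : ℂ) * z‖ ≤ ‖z‖ := fun x z => by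
    rw [hχn]
    exact mul_le_of_le_one_left (norm_nonneg _) (hχ1 x)
  set h₁ : V →ᵇ ℂ := .ofNormedAddCommGroup h hh.1 1 hh1
  set h₂ : V →ᵇ ℂ := .ofNormedAddCommGroup (fun x => (χ x : ℂ) * h x)
    ((continuous_ofReal.comp hχc).mul hh.1) 1 fun x => (hχle _ _).trans (hh1 x)
  set h₃ : V →ᵇ ℂ := .ofNormedAddCommGroup (fun x => (χ x : ℂ) * f x)
    ((continuous_ofReal.comp hχc).mul hf.1) 1 fun x => (hχle _ _).trans (hf1 x)
  have e₁ : L' h₁ = (f 0).re := by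
    refine tendsto_nhds_unique (hL' h₁) ?_
    have : ∀ n, L n h₁ = (f 0).re := fun n => by rw [hL0 n h₁ hh, ← hh0]; rfl
    simp only [this]
    exact tendsto_const_nhds
  have e₂ : L' (h₁ - h₂) ≤ η := by
    have hx : ∀ x, (h₁ - h₂) x = ((1 - χ x : ℝ) : ℂ) * h x := fun x => by
      change h x - (χ x : ℂ) * h x = _
      push_cast
      ring
    have hxn : ∀ x, ‖(h₁ - h₂) x‖ ≤ ‖h x‖ := fun x => by
      rw [hx, norm_mul, norm_real, Real.norm_eq_abs, abs_of_nonneg (by linarith [hχ1 x])]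
      exact mul_le_of_le_one_left (norm_nonneg _) (by linarith [hχ0 x])
    refine hR _ ?_ (fun x hxR => ?_) ?_
    · refine squeeze_zero_norm hxn ?_
      simpa using hhz.norm
    · rw [hx, hχR x hxR]
      simp
    · exact (BoundedContinuousFunction.norm_le zero_le_one).2 fun x => (hxn x).trans (hh1 x)
  have e₃ : L' (h₂ - h₃) ≤ C * η := by
    refine (hL'C _).trans (mul_le_mul_of_nonneg_left ?_ hC.le)
    refine (BoundedContinuousFunction.norm_le hη.le).2 fun x => ?_
    change ‖(χ x : ℂ) * h x - (χ x : ℂ) * f x‖ ≤ η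
    rw [← mul_sub]
    rcases le_total ‖x‖ (R + 1) with hx | hx
    · exact (hχle _ _).trans (hhf x hx).le
    · rw [hχR' x hx]
      simpa using hη.le
  have e₄ : L' h₃ ≤ C * η := by
    refine le_of_tendsto (hL' h₃) ?_
    have h1 := Metric.tendstoUniformlyOn_iff.1 (hfU _ (isCompact_closedBall (0 : V) (R + 1)))
      (η / 2) (by positivity)
    have h2 : ∀ᶠ n : ℕ in U, 1 / ((n : ℝ) + 1) < η / 2 :=
      (tendsto_one_div_add_atTop_nhds_zero_nat.eventually_lt_const (by positivity)).filter_mono hU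
    filter_upwards [h1, h2] with n h1 h2
    refine hLP n h₃ η hη.le fun x hxP => ?_
    change ‖(χ x : ℂ) * f x‖ ≤ η
    rcases le_total ‖x‖ (R + 1) with hx | hx
    · have h3 := h1 x (by simpa using hx)
      have h4 := hFP n _ hxP
      rw [← hgn] at h4
      rw [dist_eq_norm] at h3
      have h5 := norm_add_le (f x - g n x) (g n x)
      rw [sub_add_cancel] at h5
      exact (hχle _ _).trans (by linarith)
    · rw [hχR' x hx]
      simpa using hη.le
  rw [map_sub, e₁] at e₂
  rw [map_sub] at e₃
  have h6 : η * (1 + 2 * C) = 1 / 4 := by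
    have : (1 + 2 * C) ≠ 0 := by positivity
    simp only [η]
    field_simp
  linarith

/-- A compact convex set of positive measure contains a ball. -/
lemma exists_closedBall_subset_of_volume_pos {Ω : Set V} (hΩ : IsCompact Ω) (hconv : Convex ℝ Ω)
    (hpos : 0 < volume Ω) : ∃ p, ∃ c > 0, closedBall p c ⊆ Ω := by
  obtain ⟨p, hp⟩ : (interior Ω).Nonempty := by
    by_contra h
    rw [Set.not_nonempty_iff_eq_empty] at h
    have h1 := hconv.addHaar_frontier volume
    rw [frontier, h, Set.sdiff_empty, hΩ.isClosed.closure_eq] at h1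
    exact hpos.ne' h1
  obtain ⟨c, hc, hcs⟩ := Metric.nhds_basis_closedBall.mem_iff.1 (mem_interior_iff_mem_nhds.1 hp)
  exact ⟨p, c, hc, hcs⟩

/-- In the plane, every unit vector is part of an orthonormal basis. -/
lemma exists_orthonormal_complement (u : EuclideanSpace ℝ (Fin 2)) (hu : ‖u‖ = 1) :
    ∃ v : EuclideanSpace ℝ (Fin 2), ‖v‖ = 1 ∧ ⟪u, v⟫ = 0 ∧
      ∀ x : EuclideanSpace ℝ (Fin 2), ⟪x, u⟫ ^ 2 + ⟪x, v⟫ ^ 2 = ‖x‖ ^ 2 := by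
  have hu2 : u 0 ^ 2 + u 1 ^ 2 = 1 := by
    have := EuclideanSpace.real_norm_sq_eq u
    rw [hu, Fin.sum_univ_two] at this
    linarith
  refine ⟨!₂[-(u 1), u 0], ?_, ?_, fun x => ?_⟩
  · rw [EuclideanSpace.norm_eq, Fin.sum_univ_two]
    simp [← hu2, add_comm]
    simp [hu2]
  · simp [PiLp.inner_apply, Fin.sum_univ_two]
    ring
  · rw [EuclideanSpace.real_norm_sq_eq, Fin.sum_univ_two]
    simp [PiLp.inner_apply, Fin.sum_univ_two]
    linear_combination (x 0 ^ 2 + x 1 ^ 2) * hu2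

end ConcentricSpheres

/-- Corollary (i), circles: the union of concentric circles `P = Q·𝕋` is a sampling set
for `B_Ω` iff `Diam(Ω) < d⁻(Q)`. -/
theorem concentric_circles_sampling
    (Ω : Set (EuclideanSpace ℝ (Fin 2))) (hΩcompact : IsCompact Ω) (hΩconvex : Convex ℝ Ω)
    (hΩpos : 0 < volume Ω)
    (Q : Set ℝ) (hQpos : Q ⊆ Set.Ioi 0) (hQud : UniformlyDiscrete Q)
    (P : Set (EuclideanSpace ℝ (Fin 2)))
    (hP : P = ⋃ q ∈ Q, sphere (0 : EuclideanSpace ℝ (Fin 2)) q) :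
    IsSamplingSet Ω P ↔ Metric.diam Ω < lowerUniformDensity (Q ∪ -Q) := by
  have hu : ‖EuclideanSpace.single (0 : Fin 2) (1 : ℝ)‖ = 1 := by simp
  refine ⟨fun h => ?_, fun h => ?_⟩
  · by_contra! hd
    obtain ⟨p, c, hc, hpc⟩ := exists_closedBall_subset_of_volume_pos hΩcompact hΩconvex hΩpos
    obtain ⟨v, hv, -, hpyth⟩ := exists_orthonormal_complement _ hu
    have hdiam : 0 < Metric.diam Ω := by
      refine diam_pos ?_ hΩcompact.isBounded
      by_contra hs
      exact hΩpos.ne' ((Set.not_nontrivial_iff.1 hs).measure_zero volume)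
    refine not_isSamplingSet_of_small hΩcompact hΩconvex hc hpc hu hv hpyth (fun ε hε => ?_) h
    obtain ⟨f, h1, h2, h3, h4⟩ := exists_small_on_circles hΩcompact hΩconvex hdiam
      exists_orthonormal_complement hQpos hQud hd hε
    refine ⟨f, h1, h2, h3, fun x hx => ?_⟩
    rw [hP] at hx
    simp only [Set.mem_iUnion, exists_prop] at hx
    obtain ⟨q, hq, hx⟩ := hx
    exact h4 q hq x hx
  · exact isSamplingSet_of_diam_lt hΩcompact hQpos hQud hP h
      ⟨_, norm_ne_zero_iff.1 (hu.trans_ne one_ne_zero)⟩
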